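/- arXiv:2110.05670 — 2 statements merged into one kernel-verified Lean document; each statement's English description precedes it below -/
import Mathlib

section
/- Let $G$ be a graph on $n$ vertices and $H$ an induced subgraph on $h$ vertices obtained from $G$ by successively deleting vertices each of degree at most $\frac{n}{8}$ in the current graph. Then $\rho^2(G) \leq \rho^2(H) + \frac{(n-h)n}{4}$. -/
open SimpleGraph

attribute [local instance] Classical.propDecidable

noncomputable def specRad {V : Type*} [Fintype V] (G : SimpleGraph V) : ℝ :=
  sSup {μ : ℝ | Module.End.HasEigenvalue (Matrix.toLin' (G.adjMatrix ℝ)) μ}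

lemma specRad_set_finite {V : Type*} [Fintype V] (G : SimpleGraph V) :
    {μ : ℝ | Module.End.HasEigenvalue (Matrix.toLin' (G.adjMatrix ℝ)) μ}.Finite :=
  Module.End.finite_hasEigenvalue _

lemma specRad_ge {V : Type*} [Fintype V] (G : SimpleGraph V) (μ : ℝ) (x : V → ℝ) (hx : x ≠ 0)
    (h : (G.adjMatrix ℝ).mulVec x = μ • x) : μ ≤ specRad G := by
  refine le_csSup (specRad_set_finite G).bddAbove ?_
  refine Module.End.hasEigenvalue_of_hasEigenvector (x := x) ?_
  rw [Module.End.hasEigenvector_iff]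
  refine ⟨?_, hx⟩
  rw [Module.End.mem_eigenspace_iff, Matrix.toLin'_apply, h]

lemma adj_isHermitian {V : Type*} [Fintype V] (G : SimpleGraph V) :
    (G.adjMatrix ℝ).IsHermitian := by
  rw [Matrix.IsHermitian, Matrix.conjTranspose_eq_transpose_of_trivial]
  exact G.isSymm_adjMatrix

lemma specRad_rayleigh {V : Type*} [Fintype V] (G : SimpleGraph V) (x : V → ℝ) :
    x ⬝ᵥ (G.adjMatrix ℝ).mulVec x ≤ specRad G * (x ⬝ᵥ x) := by
  have hB : (specRad G • (1 : Matrix V V ℝ) - G.adjMatrix ℝ).IsHermitian := by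
    refine Matrix.IsHermitian.sub ?_ (adj_isHermitian G)
    rw [Matrix.IsHermitian, Matrix.conjTranspose_eq_transpose_of_trivial]
    simp
  have hP : (specRad G • (1 : Matrix V V ℝ) - G.adjMatrix ℝ).PosSemidef := by
    rw [hB.posSemidef_iff_eigenvalues_nonneg]
    intro i
    have h1 := hB.mulVec_eigenvectorBasis i
    have hne : (hB.eigenvectorBasis i).ofLp ≠ 0 := by
      intro h0
      have := hB.eigenvectorBasis.orthonormal.ne_zero i
      apply this
      ext j
      simpa using congrFun h0 j
    have h2 := specRad_ge G (specRad G - hB.eigenvalues i) _ hne (by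
      rw [Matrix.sub_mulVec, Matrix.smul_mulVec, Matrix.one_mulVec] at h1
      rw [sub_smul, ← h1]; abel)
    simp only [Pi.zero_apply]
    linarith
  have := hP.dotProduct_mulVec_nonneg x
  rw [Matrix.sub_mulVec, Matrix.smul_mulVec, Matrix.one_mulVec, dotProduct_sub,
    dotProduct_smul] at this
  simp at this
  linarith

lemma specRad_attained {V : Type*} [Fintype V] [Nonempty V] (G : SimpleGraph V) :
    ∃ x : V → ℝ, x ≠ 0 ∧ (G.adjMatrix ℝ).mulVec x = specRad G • x := by
  have hA := adj_isHermitian G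
  have hmem : specRad G ∈ {μ : ℝ | Module.End.HasEigenvalue (Matrix.toLin' (G.adjMatrix ℝ)) μ} := by
    refine Set.Nonempty.csSup_mem ?_ (specRad_set_finite G)
    obtain ⟨i⟩ := ‹Nonempty V›
    refine ⟨hA.eigenvalues i, ?_⟩
    refine Module.End.hasEigenvalue_of_hasEigenvector (x := (hA.eigenvectorBasis i).ofLp) ?_
    rw [Module.End.hasEigenvector_iff]
    constructor
    · rw [Module.End.mem_eigenspace_iff, Matrix.toLin'_apply]
      exact hA.mulVec_eigenvectorBasis i
    · intro h0
      apply hA.eigenvectorBasis.orthonormal.ne_zero i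
      ext j
      simpa using congrFun h0 j
  obtain ⟨x, hx⟩ := Module.End.HasEigenvalue.exists_hasEigenvector hmem
  rw [Module.End.hasEigenvector_iff, Module.End.mem_eigenspace_iff, Matrix.toLin'_apply] at hx
  exact ⟨x, hx.2, hx.1⟩

lemma specRad_nonneg {V : Type*} [Fintype V] (G : SimpleGraph V) : 0 ≤ specRad G := by
  rcases isEmpty_or_nonempty V with hV | ⟨⟨i⟩⟩
  · have : {μ : ℝ | Module.End.HasEigenvalue (Matrix.toLin' (G.adjMatrix ℝ)) μ} = ∅ := by
      ext μ
      simp only [Set.mem_ofPred_eq, Set.mem_empty_iff_false, iff_false]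
      intro h
      obtain ⟨x, hx⟩ := h.exists_hasEigenvector
      exact hx.2 (Subsingleton.elim _ _)
    rw [specRad, this, Real.sSup_empty]
  · have := specRad_rayleigh G (Pi.single i 1)
    simpa using this

lemma specRad_induce_univ {V : Type*} [Fintype V] (G : SimpleGraph V) (S : Set V)
    (hS : S = Set.univ) : specRad G ≤ specRad (G.induce S) := by
  rcases isEmpty_or_nonempty V with hV | hV
  · have : {μ : ℝ | Module.End.HasEigenvalue (Matrix.toLin' (G.adjMatrix ℝ)) μ} = ∅ := by
      ext μ
      simp only [Set.mem_ofPred_eq, Set.mem_empty_iff_false, iff_false]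
      intro h
      obtain ⟨x, hx⟩ := h.exists_hasEigenvector
      exact hx.2 (Subsingleton.elim _ _)
    rw [specRad, this, Real.sSup_empty]
    exact specRad_nonneg _
  · obtain ⟨x, hx, h⟩ := specRad_attained G
    refine specRad_ge _ _ (fun w => x w.1) ?_ ?_
    · intro h0
      apply hx
      ext j
      exact congrFun h0 ⟨j, hS ▸ Set.mem_univ j⟩
    · ext w
      have := congrFun h w.1
      simp only [Matrix.mulVec, dotProduct, adjMatrix_apply, Pi.smul_apply] at this ⊢
      rw [← this]
      exact Fintype.sum_equiv ((Equiv.setCongr hS).trans (Equiv.Set.univ V)) _ _ (fun a => by simp)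

lemma sum_split {V W : Type*} [Fintype V] [Fintype W] (f : W → V) (hf : Function.Injective f)
    (v : V) (hr : Set.range f = {v}ᶜ) (g : V → ℝ) : ∑ a, g a = g v + ∑ w, g (f w) := by
  have hv : ∀ w, f w ≠ v := fun w => by
    have : f w ∈ Set.range f := ⟨w, rfl⟩
    rw [hr] at this
    exact this
  have hb : Function.Bijective (fun o : Option W => o.elim v f) := by
    constructor
    · rintro (_ | a) (_ | b) hab
      · rfl
      · exact absurd hab.symm (hv b)
      · exact absurd hab (hv a)
      · exact congrArg some (hf hab)
    · intro a
      by_cases ha : a = v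
      · exact ⟨none, ha.symm⟩
      · have : a ∈ Set.range f := by rw [hr]; exact ha
        obtain ⟨w, hw⟩ := this
        exact ⟨some w, hw⟩
  rw [← Fintype.sum_bijective _ hb (fun o => g (o.elim v f)) g (fun _ => rfl), Fintype.sum_option]
  rfl

lemma specRad_step {V W : Type*} [Fintype V] [Fintype W] (G : SimpleGraph V) (H : SimpleGraph W)
    (f : W → V) (hf : Function.Injective f) (hadj : ∀ a b, H.Adj a b ↔ G.Adj (f a) (f b))
    (v : V) (hr : Set.range f = {v}ᶜ) :
    specRad G ^ 2 ≤ specRad H ^ 2 + 2 * (G.degree v : ℝ) := by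
  have : Nonempty V := ⟨v⟩
  obtain ⟨x, hx, h⟩ := specRad_attained G
  have hR := specRad_rayleigh H (fun w => x (f w))
  have hH := specRad_nonneg H
  have hG := specRad_nonneg G
  set r := specRad G with hrdef
  set q := specRad H
  set d : ℝ := (G.degree v : ℝ) with hd
  have hd0 : 0 ≤ d := Nat.cast_nonneg _
  have hrow : ∀ a, ∑ b, G.adjMatrix ℝ a b * x b = r * x a := fun a => congrFun h a
  -- the norm of the restricted vector
  set s : ℝ := ∑ w, x (f w) ^ 2 with hs
  have hs0 : 0 ≤ s := Finset.sum_nonneg fun _ _ => sq_nonneg _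
  have hyy : (fun w => x (f w)) ⬝ᵥ (fun w => x (f w)) = s := by
    simp [dotProduct, hs, pow_two]
  -- the row of the deleted vertex
  have hv : ∑ w, G.adjMatrix ℝ v (f w) * x (f w) = r * x v := by
    rw [← hrow v, sum_split f hf v hr]; simp
  have hcs : (r * x v) ^ 2 ≤ d * s := by
    rw [← hv]
    refine (Finset.sum_mul_sq_le_sq_mul_sq _ _ _).trans (le_of_eq ?_)
    congr 1
    have := sum_split f hf v hr (fun b => G.adjMatrix ℝ v b ^ 2)
    have h2 : ∑ b, G.adjMatrix ℝ v b ^ 2 = d := by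
      rw [hd, ← card_neighborFinset_eq_degree, neighborFinset_eq_filter]
      simp [adjMatrix_apply]
    rw [← h2, this]; simp
  have hquad : (fun w => x (f w)) ⬝ᵥ (H.adjMatrix ℝ).mulVec (fun w => x (f w))
      = r * s - r * x v ^ 2 := by
    have hrow' : ∀ w, (H.adjMatrix ℝ).mulVec (fun w => x (f w)) w
        = r * x (f w) - G.adjMatrix ℝ v (f w) * x v := by
      intro w
      rw [← hrow (f w), sum_split f hf v hr]
      simp only [Matrix.mulVec, dotProduct, adjMatrix_apply, hadj, G.adj_comm v]
      ring
    simp only [dotProduct, hrow', mul_sub, Finset.sum_sub_distrib]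
    congr 1
    · rw [hs, Finset.mul_sum]
      exact Finset.sum_congr rfl fun _ _ => by ring
    · rw [show r * x v ^ 2 = (r * x v) * x v by ring, ← hv, Finset.sum_mul]
      exact Finset.sum_congr rfl fun _ _ => by ring
  rw [hquad, hyy] at hR
  by_cases h2 : r ^ 2 ≤ 2 * d
  · nlinarith [sq_nonneg q]
  push Not at h2
  have hr0 : 0 < r := by
    rcases hG.lt_or_eq with h0 | h0
    · exact h0
    · rw [← h0] at h2; norm_num at h2; linarith
  have hspos : 0 < s := by
    rcases hs0.lt_or_eq with h0 | h0
    · exact h0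
    · exfalso
      rw [← h0, mul_zero] at hcs
      have hz : r * x v = 0 := by nlinarith [sq_nonneg (r * x v)]
      have hxv : x v = 0 := (mul_eq_zero.1 hz).resolve_left hr0.ne'
      have htot := sum_split f hf v hr (fun a => x a ^ 2)
      simp only [hxv] at htot
      rw [← hs, ← h0] at htot
      apply hx
      ext a
      have := (Finset.sum_eq_zero_iff_of_nonneg (fun a _ => sq_nonneg (x a))).1
        (by simpa using htot) a (Finset.mem_univ _)
      simpa using this
  have hkey : r ^ 2 - d ≤ r * q := by
    refine le_of_mul_le_mul_right ?_ hspos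
    nlinarith [mul_le_mul_of_nonneg_left hR hr0.le]
  have hsq : (r ^ 2 - d) ^ 2 ≤ (r * q) ^ 2 := pow_le_pow_left₀ (by linarith) hkey 2
  refine le_of_mul_le_mul_left ?_ (pow_pos hr0 2)
  nlinarith [sq_nonneg d]

/-- If `H = G.induce (S k)` is obtained from `G` by successively deleting
vertices whose current degree is at most `n/8`, then
`ρ²(G) ≤ ρ²(H) + (n - h)n/4`, where `h` is the number of vertices of `H`. -/
theorem specRad_sq_deletion_process {V : Type*} [Fintype V] (G : SimpleGraph V)
    (k h : ℕ) (S : ℕ → Set V) (v : ℕ → V)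
    (hS0 : S 0 = Set.univ)
    (hstep : ∀ i < k, v i ∈ S i ∧ S (i + 1) = S i \ {v i} ∧
      ((G.neighborSet (v i) ∩ S i).ncard : ℝ) ≤ (Fintype.card V : ℝ) / 8)
    (hh : (S k).ncard = h) :
    specRad G ^ 2 ≤ specRad (G.induce (S k)) ^ 2 +
      ((Fintype.card V : ℝ) - (h : ℝ)) * (Fintype.card V : ℝ) / 4 := by
  have main : ∀ i ≤ k, specRad G ^ 2 ≤ specRad (G.induce (S i)) ^ 2 +
      ((Fintype.card V : ℝ) - ((S i).ncard : ℝ)) * (Fintype.card V : ℝ) / 4 := by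
    intro i
    induction i with
    | zero =>
      intro _
      have h1 := pow_le_pow_left₀ (specRad_nonneg G) (specRad_induce_univ G (S 0) hS0) 2
      have h2 : (S 0).ncard = Fintype.card V := by
        rw [hS0, Set.ncard_univ, Nat.card_eq_fintype_card]
      rw [h2]
      linarith
    | succ i ih =>
      intro hi
      obtain ⟨hv, hS, hdeg⟩ := hstep i hi
      have ih' := ih (by omega)
      have hsub : S (i + 1) ⊆ S i := by rw [hS]; exact Set.sdiff_subset
      have hcard : (S (i + 1)).ncard + 1 = (S i).ncard := by
        rw [hS]; exact Set.ncard_sdiff_singleton_add_one hv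
      have hst := specRad_step (G.induce (S i)) (G.induce (S (i + 1)))
        (Set.inclusion hsub) (Set.inclusion_injective hsub) (fun a b => by simp)
        ⟨v i, hv⟩ (by
          ext a
          simp only [Set.range_inclusion, Set.mem_ofPred_eq, Set.mem_compl_iff,
            Set.mem_singleton_iff, hS, Set.mem_sdiff, a.2, true_and, Subtype.ext_iff])
      have hd : (((G.induce (S i)).degree ⟨v i, hv⟩ : ℕ) : ℝ) ≤ (Fintype.card V : ℝ) / 8 := by
        refine le_trans (le_of_eq ?_) hdeg
        congr 1
        rw [← card_neighborSet_eq_degree, ← Nat.card_eq_fintype_card, Nat.card_coe_set_eq,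
          ← Set.ncard_image_of_injective _ Subtype.val_injective]
        congr 1
        ext a
        simp [and_comm]
      have hc : ((S (i + 1)).ncard : ℝ) + 1 = ((S i).ncard : ℝ) := by exact_mod_cast hcard
      rw [← hc] at ih'
      have hst' : specRad (G.induce (S i)) ^ 2 ≤ specRad (G.induce (S (i + 1))) ^ 2 +
          2 * ((Fintype.card V : ℝ) / 8) := by
        refine hst.trans ?_
        gcongr
        refine le_trans (le_of_eq ?_) hd
        congr!
      linarith
  rw [← hh]
  exact main k le_rfl
end

section
/- For every real $0 < \varepsilon < \frac{1}{4}$ there exists $N = N(\varepsilon)$ such that every graph $G$ on $n \geq N$ vertices with spectral radius $\rho(G) > \sqrt{\lfloor n^2/4 \rfloor}$ contains a cycle of length $\ell$ for every integer $\ell \in [3, (\frac{1}{4} - \varepsilon) n]$. -/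
open SimpleGraph

attribute [local instance] Classical.propDecidable

def HasCyc {V : Type*} (G : SimpleGraph V) (l : ℕ) : Prop :=
  ∃ (v : V) (c : G.Walk v v), c.IsCycle ∧ c.length = l

lemma HasCyc.of_path {V : Type*} {G : SimpleGraph V} {u v : V} (p : G.Walk u v) (hp : p.IsPath)
    (h2 : 2 ≤ p.length) (h : G.Adj v u) : HasCyc G (p.length + 1) := by
  refine ⟨v, Walk.cons h p, ?_, by simp⟩
  rw [Walk.cons_isCycle_iff]
  refine ⟨hp, fun hmem => ?_⟩
  cases p with
  | nil => simp at h2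
  | cons h' q =>
    rw [Walk.cons_isPath_iff] at hp
    simp only [Walk.edges_cons, List.mem_cons] at hmem
    rcases hmem with hmem | hmem
    · rw [Sym2.eq_swap] at hmem
      have := (Sym2.congr_right).1 hmem
      subst this
      have := Walk.length_eq_zero_iff.2 (Walk.isPath_iff_nil.1 hp.1)
      rw [Walk.length_cons] at h2
      omega
    · exact hp.2 (q.snd_mem_support_of_mem_edges hmem)

lemma HasCyc.of_list {V : Type*} {G : SimpleGraph V} (l : List V) (hc : l.IsChain G.Adj)
    (hn : l.Nodup) (h3 : 3 ≤ l.length) (hne : l ≠ []) (h : G.Adj (l.getLast hne) (l.head hne)) :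
    HasCyc G l.length := by
  have hp : (Walk.ofSupport l hne hc).IsPath := by
    rw [Walk.isPath_def, Walk.support_ofSupport]; exact hn
  have hl := Walk.length_ofSupport hne hc
  have := HasCyc.of_path _ hp (by rw [hl]; omega) h
  rw [hl] at this
  convert this using 1
  omega

/-- number of ordered adjacent pairs inside `W` -/
noncomputable def e2 {V : Type*} (G : SimpleGraph V) (W : Finset V) : ℕ :=
  ∑ u ∈ W, (W.filter (G.Adj u)).card

def PathIn {V : Type*} (G : SimpleGraph V) (W : Finset V) (l : List V) : Prop :=
  l.IsChain G.Adj ∧ l.Nodup ∧ ∀ x ∈ l, x ∈ W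

lemma PathIn.cons {V : Type*} {G : SimpleGraph V} {W : Finset V} {l : List V} (h : PathIn G W l)
    {x : V} (hx : x ∈ W) (hxl : x ∉ l) (ha : ∀ y ∈ l.head?, G.Adj x y) : PathIn G W (x :: l) := by
  refine ⟨List.isChain_cons.2 ⟨ha, h.1⟩, List.nodup_cons.2 ⟨hxl, h.2.1⟩, ?_⟩
  intro y hy
  rcases List.mem_cons.1 hy with rfl | hy
  · exact hx
  · exact h.2.2 y hy

lemma PathIn.reverse {V : Type*} {G : SimpleGraph V} {W : Finset V} {l : List V}
    (h : PathIn G W l) : PathIn G W l.reverse := by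
  refine ⟨?_, List.nodup_reverse.2 h.2.1, fun x hx => h.2.2 x (List.mem_reverse.1 hx)⟩
  rw [List.isChain_reverse]
  exact h.1.imp fun a b hab => hab.symm

lemma PathIn.cyc_extend {V : Type*} {G : SimpleGraph V} {W : Finset V} {c : List V}
    (h : PathIn G W c) (hcl : ∀ x ∈ c.getLast?, ∀ y ∈ c.head?, G.Adj x y)
    {w x : V} (hw : w ∈ W) (hwc : w ∉ c) (hx : x ∈ c) (hwx : G.Adj w x) :
    ∃ l, PathIn G W l ∧ l.length = c.length + 1 := by
  obtain ⟨c1, c2, rfl⟩ := List.append_of_mem hx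
  refine ⟨w :: ((x :: c2) ++ c1), PathIn.cons ⟨?_, ?_, ?_⟩ hw ?_ ?_, ?_⟩
  · rw [List.isChain_append]
    obtain ⟨h1, h2, h3⟩ := List.isChain_append.1 h.1
    refine ⟨h2, h1, fun a ha b hb => hcl a ?_ b ?_⟩
    · rw [List.getLast?_append]; simp at ha ⊢; simp [ha]
    · rw [List.head?_append]; simp at hb ⊢; simp [hb]
  · have := h.2.1
    exact (List.perm_append_comm.nodup_iff).1 this
  · intro y hy
    exact h.2.2 y (List.perm_append_comm.mem_iff.1 hy)
  · intro hy
    exact hwc (List.perm_append_comm.mem_iff.1 hy)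
  · simp [hwx]
  · simp; omega

lemma PathIn.close {V : Type*} {G : SimpleGraph V} {W : Finset V} {l : List V} {M : ℕ}
    (h : PathIn G W l) (hl : l.length ≤ M + 1)
    (hmax : ∀ l', PathIn G W l' → l'.length ≤ l.length)
    (hdeg : ∀ u ∈ W, M + 1 ≤ 2 * (W.filter (G.Adj u)).card)
    {w x : V} (hw : w ∈ W) (hwc : w ∉ l) (hx : x ∈ l) (hwx : G.Adj w x) : False := by
  have hne : l ≠ [] := by rintro rfl; simp at hx
  have hpos : 0 < l.length := List.length_pos_iff.2 hne
  set s := l.length with hs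
  -- neighbours of ends are inside
  have hA : ∀ y ∈ W, G.Adj (l[0]) y → y ∈ l := by
    intro y hy hay
    by_contra hyl
    have := hmax (y :: l) (h.cons hy hyl (by
      intro z hz; rw [List.head?_eq_getElem?] at hz
      rw [List.getElem?_eq_getElem (by omega)] at hz
      simp only [Option.mem_def, Option.some.injEq] at hz
      rw [← hz]; exact hay.symm))
    simp at this; omega
  have hB : ∀ y ∈ W, G.Adj (l[s-1]) y → y ∈ l := by
    intro y hy hay
    by_contra hyl
    have := hmax (y :: l.reverse) (h.reverse.cons hy (by simpa using hyl) (by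
      intro z hz; rw [List.head?_reverse, List.getLast?_eq_getElem?] at hz
      have : l.length - 1 < l.length := by omega
      simp [this] at hz; rw [← hz]; exact hay.symm))
    simp at this; omega
  let f : ℕ → V := fun i => l.getD i (l[0])
  have hf : ∀ i (hi : i < s), f i = l[i] := fun i hi => by simp [f, hs ▸ hi]
  let I0 := (Finset.range (s-1)).filter (fun i => G.Adj (l[0]) (f (i+1)))
  let I1 := (Finset.range (s-1)).filter (fun i => G.Adj (l[s-1]) (f i))
  have h0 : (W.filter (G.Adj (l[0]))).card ≤ I0.card := by
    refine (Finset.card_le_card (t := I0.image (fun i => f (i+1))) ?_).trans Finset.card_image_le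
    intro y hy
    obtain ⟨hy, hay⟩ := Finset.mem_filter.1 hy
    obtain ⟨j, hj, rfl⟩ := List.mem_iff_getElem.1 (hA y hy hay)
    have hj0 : j ≠ 0 := by rintro rfl; exact hay.ne rfl
    refine Finset.mem_image.2 ⟨j - 1, ?_, ?_⟩
    · simp only [I0, Finset.mem_filter, Finset.mem_range]
      refine ⟨by omega, ?_⟩
      rw [show j - 1 + 1 = j by omega, hf j hj]; exact hay
    · rw [show j - 1 + 1 = j by omega, hf j hj]
  have h1 : (W.filter (G.Adj (l[s-1]))).card ≤ I1.card := by
    refine (Finset.card_le_card (t := I1.image (fun i => f i)) ?_).trans Finset.card_image_le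
    intro y hy
    obtain ⟨hy, hay⟩ := Finset.mem_filter.1 hy
    obtain ⟨j, hj, rfl⟩ := List.mem_iff_getElem.1 (hB y hy hay)
    have hj0 : j ≠ s-1 := by rintro rfl; exact hay.ne rfl
    refine Finset.mem_image.2 ⟨j, ?_, hf j hj⟩
    simp only [I1, Finset.mem_filter, Finset.mem_range]
    refine ⟨by omega, ?_⟩
    rw [hf j hj]; exact hay
  have hd0 := hdeg (l[0]) (h.2.2 _ (List.getElem_mem _))
  have hd1 := hdeg (l[s-1]) (h.2.2 _ (List.getElem_mem _))
  have hnd : ¬ Disjoint I0 I1 := by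
    intro hd
    have hu := Finset.card_union_of_disjoint hd
    have hsub : (I0 ∪ I1).card ≤ (Finset.range (s-1)).card := Finset.card_le_card
      (Finset.union_subset (Finset.filter_subset _ _) (Finset.filter_subset _ _))
    rw [Finset.card_range] at hsub
    omega
  obtain ⟨i, hi0, hi1⟩ := Finset.not_disjoint_iff.1 hnd
  simp only [I0, I1, Finset.mem_filter, Finset.mem_range] at hi0 hi1
  obtain ⟨his, hi0⟩ := hi0
  have hi1 := hi1.2
  rw [hf _ (by omega)] at hi0 hi1
  have hperm : ((l.take (i+1)).reverse ++ l.drop (i+1)).Perm l := by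
    have := (List.reverse_perm (l.take (i+1))).append_right (l.drop (i+1))
    rwa [List.take_append_drop] at this
  have hch := h.1
  rw [← List.take_append_drop (i+1) l, List.isChain_append] at hch
  have hc : PathIn G W ((l.take (i+1)).reverse ++ l.drop (i+1)) := by
    refine ⟨?_, hperm.nodup_iff.2 h.2.1, fun y hy => h.2.2 y (hperm.mem_iff.1 hy)⟩
    rw [List.isChain_append]
    refine ⟨?_, hch.2.1, ?_⟩
    · rw [List.isChain_reverse]; exact hch.1.imp fun a b hab => hab.symm
    · intro a ha b hb
      rw [List.getLast?_reverse, List.head?_take, List.head?_eq_getElem?] at ha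
      rw [List.head?_drop] at hb
      have h2 : i + 1 < l.length := by omega
      have h3 : 0 < l.length := hpos
      simp [h3] at ha
      simp [h2] at hb
      rw [← ha, ← hb]; exact hi0
  obtain ⟨l', hl', hlen⟩ := hc.cyc_extend (by
    intro a ha b hb
    rw [List.getLast?_append, List.getLast?_drop, List.getLast?_eq_getElem?] at ha
    rw [List.head?_append, List.head?_reverse, List.getLast?_take] at hb
    have h2 : i + 1 < l.length := by omega
    have h3 : i < l.length := by omega
    have h4 : l.length - 1 < l.length := by omega
    have h5 : ¬ (l.length ≤ i + 1) := by omega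
    simp [h4, h5] at ha
    simp [h3] at hb
    rw [← ha, ← hb]; exact hi1) hw (by rw [hperm.mem_iff]; exact hwc) (hperm.mem_iff.2 hx) hwx
  have := hmax l' hl'
  have := hperm.length_eq
  omega

lemma exists_max_path {V : Type*} (G : SimpleGraph V) (W : Finset V) :
    ∃ l, PathIn G W l ∧ ∀ l', PathIn G W l' → l'.length ≤ l.length := by
  have hb : ∀ l, PathIn G W l → l.length ≤ W.card := by
    intro l hl
    rw [← List.toFinset_card_of_nodup hl.2.1]
    exact Finset.card_le_card fun x hx => hl.2.2 x (List.mem_toFinset.1 hx)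
  let S : Set ℕ := {k | ∃ l, PathIn G W l ∧ l.length = k}
  have hS : S.Nonempty := ⟨0, [], ⟨by simp, by simp, by simp⟩, rfl⟩
  have hbd : BddAbove S := ⟨W.card, by rintro k ⟨l, hl, rfl⟩; exact hb l hl⟩
  obtain ⟨l, hl, hk⟩ := Nat.sSup_mem hS hbd
  exact ⟨l, hl, fun l' hl' => hk ▸ le_csSup hbd ⟨l', hl', rfl⟩⟩

lemma e2_erase {V : Type*} (G : SimpleGraph V) (W : Finset V) (u : V) (hu : u ∈ W) :
    e2 G W = e2 G (W.erase u) + 2 * (W.filter (G.Adj u)).card := by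
  unfold e2
  rw [← Finset.add_sum_erase W _ hu]
  have : ∀ v ∈ W.erase u, (W.filter (G.Adj v)).card =
      ((W.erase u).filter (G.Adj v)).card + if G.Adj u v then 1 else 0 := by
    intro v hv
    by_cases huv : G.Adj u v
    · rw [if_pos huv, Finset.filter_erase, Finset.card_erase_add_one]
      exact Finset.mem_filter.2 ⟨hu, huv.symm⟩
    · rw [if_neg huv, Finset.filter_erase, Finset.erase_eq_of_notMem]
      · rfl
      · intro h; exact huv (Finset.mem_filter.1 h).2.symm
  rw [Finset.sum_congr rfl this, Finset.sum_add_distrib, ← Finset.card_filter]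
  have : (W.erase u).filter (G.Adj u) = W.filter (G.Adj u) := by
    rw [Finset.filter_erase, Finset.erase_eq_of_notMem]
    intro h; exact (Finset.mem_filter.1 h).2.ne rfl
  rw [this]; ring

lemma e2_le {V : Type*} (G : SimpleGraph V) (W : Finset V) : e2 G W ≤ W.card * (W.card - 1) := by
  unfold e2
  rw [← smul_eq_mul, ← Finset.sum_const]
  refine Finset.sum_le_sum fun u hu => ?_
  rw [← Finset.card_erase_of_mem hu]
  refine Finset.card_le_card fun v hv => ?_
  obtain ⟨h1, h2⟩ := Finset.mem_filter.1 hv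
  exact Finset.mem_erase.2 ⟨h2.ne', h1⟩

lemma e2_split {V : Type*} (G : SimpleGraph V) (W P : Finset V) (hP : P ⊆ W)
    (h : ∀ x ∈ P, ∀ w ∈ W \ P, ¬ G.Adj w x) : e2 G W = e2 G P + e2 G (W \ P) := by
  unfold e2
  rw [← Finset.sum_sdiff hP, add_comm]
  congr 1
  · refine Finset.sum_congr rfl fun u hu => ?_
    congr 1
    ext v
    simp only [Finset.mem_filter]
    constructor
    · rintro ⟨hv, ha⟩
      refine ⟨?_, ha⟩
      by_contra hvP
      exact h u hu v (Finset.mem_sdiff.2 ⟨hv, hvP⟩) ha.symm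
    · rintro ⟨hv, ha⟩; exact ⟨hP hv, ha⟩
  · refine Finset.sum_congr rfl fun u hu => ?_
    congr 1
    ext v
    simp only [Finset.mem_filter]
    constructor
    · rintro ⟨hv, ha⟩
      refine ⟨?_, ha⟩
      refine Finset.mem_sdiff.2 ⟨hv, fun hvP => h v hvP u hu ha⟩
    · rintro ⟨hv, ha⟩; exact ⟨(Finset.mem_sdiff.1 hv).1, ha⟩

/-- Erdős–Gallai for paths. -/
theorem erdos_gallai_path {V : Type*} (G : SimpleGraph V) (M : ℕ) (W : Finset V)
    (h : M * W.card < e2 G W) : ∃ l, PathIn G W l ∧ M + 2 ≤ l.length := by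
  induction W using Finset.strongInduction with
  | H W ih =>
  by_cases hlow : ∃ u ∈ W, 2 * (W.filter (G.Adj u)).card ≤ M
  · obtain ⟨u, hu, hd⟩ := hlow
    have h1 := e2_erase G W u hu
    have h2 := Finset.card_erase_add_one hu
    obtain ⟨l, hl, hlen⟩ := ih (W.erase u) (Finset.erase_ssubset hu) (by
      rw [← h2] at h
      have : M * ((W.erase u).card + 1) = M * (W.erase u).card + M := by ring
      omega)
    exact ⟨l, ⟨hl.1, hl.2.1, fun x hx => Finset.mem_of_mem_erase (hl.2.2 x hx)⟩, hlen⟩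
  push Not at hlow
  obtain ⟨l, hl, hmax⟩ := exists_max_path G W
  by_contra hcon
  have hshort : l.length ≤ M + 1 := by
    by_contra h'
    exact hcon ⟨l, hl, by omega⟩
  have hPW : l.toFinset ⊆ W := fun x hx => hl.2.2 x (List.mem_toFinset.1 hx)
  have hsp := e2_split G W l.toFinset hPW (by
    intro x hx w hw hwx
    obtain ⟨hw, hwl⟩ := Finset.mem_sdiff.1 hw
    rw [List.mem_toFinset] at hx hwl
    exact hl.close hshort hmax (fun u hu => hlow u hu) hw hwl hx hwx)
  have hWne : W.Nonempty := by
    rw [Finset.nonempty_iff_ne_empty]; rintro rfl; simp [e2] at h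
  have hlne : l ≠ [] := by
    rintro rfl
    obtain ⟨w, hw⟩ := hWne
    have := hmax [w] ⟨by simp, by simp, by simpa using hw⟩
    simp at this
  have hle := e2_le G l.toFinset
  have hcard := List.toFinset_card_of_nodup hl.2.1
  have hle2 : e2 G l.toFinset ≤ M * l.toFinset.card := by
    refine hle.trans ?_
    rw [mul_comm]
    exact Nat.mul_le_mul_right _ (by omega)
  have hc2 := Finset.card_sdiff_add_card_eq_card hPW
  obtain ⟨l', hl', hlen⟩ := ih (W \ l.toFinset) (by
      refine Finset.sdiff_ssubset hPW ?_
      rw [← Finset.card_pos, hcard]; exact List.length_pos_iff.2 hlne) (by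
    rw [← hc2, mul_add] at h
    omega)
  exact hcon ⟨l', ⟨hl'.1, hl'.2.1, fun x hx => (Finset.mem_sdiff.1 (hl'.2.2 x hx)).1⟩, hlen⟩

/-- Spectral decomposition data for the adjacency matrix. -/
structure Spec {V : Type*} [Fintype V] (G : SimpleGraph V) where
  lam : V → ℝ
  b : V → V → ℝ
  orth : ∀ i j, ∑ u, b i u * b j u = if i = j then 1 else 0
  compl : ∀ u v, ∑ i, b i u * b i v = if u = v then 1 else 0
  pow : ∀ (k : ℕ) u v, ((G.adjMatrix ℝ) ^ k) u v = ∑ i, lam i ^ k * (b i u * b i v)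
  i0 : V
  hmax : ∀ i, lam i ≤ lam i0

lemma exists_spec {V : Type*} [Fintype V] [Nonempty V] (G : SimpleGraph V) : Nonempty (Spec G) := by
  have hA : (G.adjMatrix ℝ).IsHermitian := by
    rw [Matrix.IsHermitian, Matrix.conjTranspose_eq_transpose_of_trivial]
    exact G.transpose_adjMatrix
  let U : Matrix V V ℝ := (hA.eigenvectorUnitary : Matrix V V ℝ)
  have hU1 : U * star U = 1 := Unitary.coe_mul_star_self hA.eigenvectorUnitary
  have hU2 : star U * U = 1 := Unitary.coe_star_mul_self hA.eigenvectorUnitary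
  have hsp : G.adjMatrix ℝ = U * Matrix.diagonal hA.eigenvalues * star U := by
    have := hA.spectral_theorem
    simpa [Unitary.conjStarAlgAut_apply] using this
  generalize hA.eigenvalues = lam at hsp
  clear_value U
  have hpow : ∀ k : ℕ, (G.adjMatrix ℝ) ^ k = U * Matrix.diagonal (fun i => lam i ^ k) * star U := by
    intro k
    induction k with
    | zero => simp [hU1]
    | succ k ih =>
      rw [pow_succ, ih]
      conv_lhs => rw [hsp]
      calc _ = U * Matrix.diagonal (fun i => lam i ^ k) * (star U * U) * Matrix.diagonal lam * star U := by
            simp only [Matrix.mul_assoc]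
        _ = _ := by
            rw [hU2, Matrix.mul_one, Matrix.mul_assoc U, Matrix.diagonal_mul_diagonal]
            simp only [pow_succ]
  obtain ⟨i0, hi0⟩ := Finite.exists_max lam
  refine ⟨⟨lam, fun i u => U u i, ?_, ?_, ?_, i0, hi0⟩⟩
  · intro i j
    have := congrFun (congrFun hU2 i) j
    rw [Matrix.mul_apply, Matrix.one_apply] at this
    simpa [Matrix.star_apply] using this
  · intro u v
    have := congrFun (congrFun hU1 u) v
    rw [Matrix.mul_apply, Matrix.one_apply] at this
    simpa [Matrix.star_apply] using this
  · intro k u v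
    rw [hpow k, Matrix.mul_apply]
    refine Finset.sum_congr rfl fun i _ => ?_
    rw [Matrix.mul_diagonal, Matrix.star_apply]
    simp; ring

/-- real adjacency indicator -/
noncomputable def adj {V : Type*} (G : SimpleGraph V) (u v : V) : ℝ := if G.Adj u v then 1 else 0

lemma adj_nonneg {V : Type*} (G : SimpleGraph V) (u v : V) : 0 ≤ adj G u v := by
  unfold adj; split_ifs <;> norm_num

lemma adj_le_one {V : Type*} (G : SimpleGraph V) (u v : V) : adj G u v ≤ 1 := by
  unfold adj; split_ifs <;> norm_num

lemma adj_sq {V : Type*} (G : SimpleGraph V) (u v : V) : adj G u v ^ 2 = adj G u v := by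
  unfold adj; split_ifs <;> norm_num

lemma adj_comm {V : Type*} (G : SimpleGraph V) (u v : V) : adj G u v = adj G v u := by
  unfold adj; simp only [G.adj_comm]

noncomputable def quad {V : Type*} [Fintype V] (G : SimpleGraph V) (f : V → ℝ) : ℝ :=
  ∑ u, ∑ v, adj G u v * (f u * f v)

namespace Spec
variable {V : Type*} [Fintype V] {G : SimpleGraph V} (S : Spec G)

/-- the spectral radius -/
noncomputable def rho : ℝ := S.lam S.i0

/-- coefficient -/
noncomputable def co (i : V) (f : V → ℝ) : ℝ := ∑ u, S.b i u * f u

lemma adj_eq (u v : V) : adj G u v = ∑ i, S.lam i * (S.b i u * S.b i v) := by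
  have := S.pow 1 u v
  simpa [adj] using this

lemma quad_eq (f : V → ℝ) : quad G f = ∑ i, S.lam i * S.co i f ^ 2 := by
  unfold quad co
  simp_rw [S.adj_eq, Finset.sum_mul, sq, Finset.sum_mul_sum, Finset.mul_sum]
  calc _ = ∑ u, ∑ i, ∑ v, S.lam i * (S.b i u * S.b i v) * (f u * f v) :=
        Finset.sum_congr rfl fun u _ => Finset.sum_comm
    _ = ∑ i, ∑ u, ∑ v, S.lam i * (S.b i u * S.b i v) * (f u * f v) := Finset.sum_comm
    _ = _ := by
      refine Finset.sum_congr rfl fun i _ => Finset.sum_congr rfl fun u _ =>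
        Finset.sum_congr rfl fun v _ => by ring

lemma norm_eq (f : V → ℝ) : ∑ u, f u ^ 2 = ∑ i, S.co i f ^ 2 := by
  unfold co
  simp_rw [sq, Finset.sum_mul_sum]
  calc ∑ u, f u * f u = ∑ u, ∑ v, (if u = v then 1 else 0) * (f u * f v) := by simp
    _ = ∑ u, ∑ v, ∑ i, S.b i u * S.b i v * (f u * f v) := by
        simp_rw [← S.compl, Finset.sum_mul]
    _ = ∑ u, ∑ i, ∑ v, S.b i u * S.b i v * (f u * f v) :=
        Finset.sum_congr rfl fun u _ => Finset.sum_comm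
    _ = ∑ i, ∑ u, ∑ v, S.b i u * S.b i v * (f u * f v) := Finset.sum_comm
    _ = _ := by
      refine Finset.sum_congr rfl fun i _ => Finset.sum_congr rfl fun u _ =>
        Finset.sum_congr rfl fun v _ => by ring

lemma co_b (i j : V) : S.co i (S.b j) = if i = j then 1 else 0 := S.orth i j

lemma expand (f : V → ℝ) (u : V) : f u = ∑ i, S.co i f * S.b i u := by
  unfold co
  simp_rw [Finset.sum_mul]
  rw [Finset.sum_comm]
  calc f u = ∑ v, (if v = u then 1 else 0) * f v := by simp
    _ = _ := by
      simp_rw [← S.compl, Finset.sum_mul]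
      exact Finset.sum_congr rfl fun v _ => Finset.sum_congr rfl fun i _ => by ring

lemma norm_b (i : V) : ∑ u, S.b i u ^ 2 = 1 := by
  have := S.orth i i
  simpa [sq] using this

lemma quad_b (i : V) : quad G (S.b i) = S.lam i := by
  rw [S.quad_eq]; simp [S.co_b]

lemma quad_le (f : V → ℝ) : quad G f ≤ S.rho * ∑ u, f u ^ 2 := by
  rw [S.quad_eq, S.norm_eq, Finset.mul_sum]
  exact Finset.sum_le_sum fun i _ => mul_le_mul_of_nonneg_right (S.hmax i) (sq_nonneg _)

lemma abs_quad_le (f : V → ℝ) : |quad G f| ≤ quad G (fun u => |f u|) := by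
  unfold quad
  refine (Finset.abs_sum_le_sum_abs _ _).trans (Finset.sum_le_sum fun u _ => ?_)
  refine (Finset.abs_sum_le_sum_abs _ _).trans (Finset.sum_le_sum fun v _ => ?_)
  rw [abs_mul, abs_mul, abs_of_nonneg (adj_nonneg G u v)]

lemma abs_lam_le (i : V) : |S.lam i| ≤ S.rho := by
  rw [← S.quad_b i]
  refine (abs_quad_le _).trans ((S.quad_le _).trans ?_)
  simp [S.norm_b]

lemma rho_nonneg : 0 ≤ S.rho := (abs_nonneg _).trans (S.abs_lam_le S.i0)

lemma specRad_le : specRad G ≤ S.rho := by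
  refine Real.sSup_le ?_ S.rho_nonneg
  intro μ hμ
  obtain ⟨f, hf⟩ := hμ.exists_hasEigenvector
  have h1 := hf.apply_eq_smul
  have hpos : 0 < ∑ u, f u ^ 2 := by
    obtain ⟨u, hu⟩ := Function.ne_iff.1 hf.2
    exact Finset.sum_pos' (fun _ _ => sq_nonneg _) ⟨u, Finset.mem_univ _, by positivity [show f u ≠ 0 from hu]⟩
  have h2 : quad G f = μ * ∑ u, f u ^ 2 := by
    unfold quad
    rw [Finset.mul_sum]
    refine Finset.sum_congr rfl fun u _ => ?_
    have := congrFun h1 u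
    simp only [Matrix.toLin'_apply, Matrix.mulVec, dotProduct, adjMatrix_apply, Pi.smul_apply, smul_eq_mul] at this
    calc _ = f u * ∑ v, (if G.Adj u v then 1 else 0) * f v := by
          rw [Finset.mul_sum]; exact Finset.sum_congr rfl fun v _ => by unfold adj; ring
      _ = _ := by rw [this]; ring
  have h3 := S.quad_le f
  rw [h2] at h3
  exact le_of_mul_le_mul_right h3 hpos

/-- degree -/
lemma deg_eq (u : V) : ∑ v, adj G u v = ∑ i, S.lam i ^ 2 * S.b i u ^ 2 := by
  have := S.pow 2 u u
  rw [sq, Matrix.mul_apply] at this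
  simp_rw [sq (S.b _ u)]
  rw [← this]
  refine Finset.sum_congr rfl fun v _ => ?_
  rw [adjMatrix_apply, adjMatrix_apply, ← adj_sq]
  simp only [G.adj_comm v u, adj, sq]

lemma trace_pow (k : ℕ) : ∑ u, ((G.adjMatrix ℝ) ^ k) u u = ∑ i, S.lam i ^ k := by
  simp_rw [S.pow]
  rw [Finset.sum_comm]
  refine Finset.sum_congr rfl fun i _ => ?_
  rw [← Finset.mul_sum]
  have := S.norm_b i
  simp_rw [sq] at this
  rw [this, mul_one]

lemma sum_adj_eq : ∑ u, ∑ v, adj G u v = ∑ i, S.lam i ^ 2 := by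
  simp_rw [S.deg_eq]
  rw [Finset.sum_comm]
  refine Finset.sum_congr rfl fun i _ => ?_
  rw [← Finset.mul_sum, S.norm_b, mul_one]

/-- `2 e ≤ ρ m` if all edges live on `W`, `m = |W|`. -/
lemma sum_adj_le (W : Finset V) (hW : ∀ u v, G.Adj u v → u ∈ W) :
    ∑ u, ∑ v, adj G u v ≤ S.rho * W.card := by
  have h := S.quad_le (fun u => if u ∈ W then 1 else 0)
  have h1 : quad G (fun u => if u ∈ W then 1 else 0) = ∑ u, ∑ v, adj G u v := by
    unfold quad
    refine Finset.sum_congr rfl fun u _ => Finset.sum_congr rfl fun v _ => ?_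
    by_cases huv : G.Adj u v
    · simp [hW u v huv, hW v u huv.symm]
    · simp [adj, huv]
  rw [h1] at h
  simpa using h

end Spec

lemma chain_count {V : Type*} [Fintype V] (G : SimpleGraph V) (m : ℕ) (u v : V) :
    ((G.adjMatrix ℝ) ^ (m + 1)) u v =
      ∑ g : Fin m → V, if (u :: (List.ofFn g ++ [v])).IsChain G.Adj then (1 : ℝ) else 0 := by
  induction m generalizing u with
  | zero => simp [adjMatrix_apply]
  | succ m ih =>
    rw [pow_succ', Matrix.mul_apply, ← (Fin.consEquiv (fun _ : Fin (m+1) => V)).sum_comp,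
      Fintype.sum_prod_type]
    refine Finset.sum_congr rfl fun w _ => ?_
    rw [ih w, adjMatrix_apply, Finset.mul_sum]
    refine Finset.sum_congr rfl fun g _ => ?_
    have : List.ofFn (Fin.consEquiv (fun _ : Fin (m+1) => V) (w, g)) = w :: List.ofFn g := by
      rw [List.ofFn_succ]; simp [Fin.consEquiv]
    rw [this]
    simp only [List.cons_append, List.isChain_cons_cons]
    by_cases h : G.Adj u w <;> simp [h]

noncomputable def LinkSet {V : Type*} [Fintype V] (G : SimpleGraph V) (u v : V) (m : ℕ) :
    Finset (Fin m → V) :=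
  Finset.univ.filter fun g => (u :: (List.ofFn g ++ [v])).IsChain G.Adj ∧ Function.Injective g ∧
    ∀ i, g i ≠ u ∧ g i ≠ v

lemma card_det {V : Type*} [Fintype V] (m : ℕ) (i : Fin (m+1)) (T : Finset (Fin (m+1) → V))
    (h : ∀ g ∈ T, ∀ g' ∈ T, (∀ k, g (i.succAbove k) = g' (i.succAbove k)) → g i = g' i) :
    T.card ≤ Fintype.card V ^ m := by
  have : (Finset.univ : Finset (Fin m → V)).card = Fintype.card V ^ m := by simp
  rw [← this]
  refine Finset.card_le_card_of_injOn (fun g k => g (i.succAbove k)) (fun _ _ => Finset.mem_univ _) ?_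
  intro g hg g' hg' hgg
  have hk : ∀ k, g (i.succAbove k) = g' (i.succAbove k) := fun k => congrFun hgg k
  funext j
  rcases Fin.eq_self_or_eq_succAbove i j with rfl | ⟨k, rfl⟩
  · exact h g hg g' hg' hk
  · exact hk k

lemma link_card {V : Type*} [Fintype V] (G : SimpleGraph V) (m : ℕ) (u v : V) :
    ((G.adjMatrix ℝ) ^ (m + 2)) u v - ((m+1)^2 + 2*(m+1)) * (Fintype.card V : ℝ) ^ m ≤
      (LinkSet G u v (m+1)).card := by
  rw [chain_count, Finset.sum_boole]
  let B1 : Fin (m+1) × Fin (m+1) → Finset (Fin (m+1) → V) := fun p =>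
    if p.1 = p.2 then ∅ else Finset.univ.filter fun g => g p.1 = g p.2
  let Bu : V → Fin (m+1) → Finset (Fin (m+1) → V) := fun w i => Finset.univ.filter fun g => g i = w
  have hB1 : ∀ p, (B1 p).card ≤ Fintype.card V ^ m := by
    intro p
    by_cases hp : p.1 = p.2
    · simp [B1, hp]
    · simp only [B1, if_neg hp]
      refine card_det m p.1 _ ?_
      intro g hg g' hg' hk
      simp only [Finset.mem_filter, Finset.mem_univ, true_and] at hg hg'
      obtain ⟨k, hk'⟩ := Fin.exists_succAbove_eq (Ne.symm hp)
      rw [hg, hg', ← hk']; exact hk k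
  have hBu : ∀ w i, (Bu w i).card ≤ Fintype.card V ^ m := by
    intro w i
    refine card_det m i _ ?_
    intro g hg g' hg' hk
    simp only [Bu, Finset.mem_filter, Finset.mem_univ, true_and] at hg hg'
    rw [hg, hg']
  have hsub : (Finset.univ.filter fun g : Fin (m+1) → V => (u :: (List.ofFn g ++ [v])).IsChain G.Adj) ⊆
      LinkSet G u v (m+1) ∪ (Finset.univ.biUnion B1 ∪ (Finset.univ.biUnion (Bu u) ∪ Finset.univ.biUnion (Bu v))) := by
    intro g hg
    simp only [Finset.mem_filter, Finset.mem_univ, true_and] at hg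
    simp only [LinkSet, Finset.mem_union, Finset.mem_filter, Finset.mem_univ, true_and, Finset.mem_biUnion]
    by_contra hcon
    rw [not_or, not_or, not_or, not_exists, not_exists, not_exists] at hcon
    obtain ⟨h1, h2, h3, h4⟩ := hcon
    refine h1 ⟨hg, ?_, ?_⟩
    · intro i j hij
      by_contra hne
      refine h2 (i, j) ?_
      simp [B1, hne, hij]
    · intro i
      exact ⟨fun h => h3 i (by simp [Bu, h]), fun h => h4 i (by simp [Bu, h])⟩
  have hc := Finset.card_le_card hsub
  have h1 : (Finset.univ.biUnion B1).card ≤ (m+1)^2 * Fintype.card V ^ m := by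
    refine (Finset.card_biUnion_le).trans ((Finset.sum_le_sum fun p _ => hB1 p).trans ?_)
    simp [sq]
  have h2 : ∀ w, (Finset.univ.biUnion (Bu w)).card ≤ (m+1) * Fintype.card V ^ m := by
    intro w
    refine (Finset.card_biUnion_le).trans ((Finset.sum_le_sum fun p _ => hBu w p).trans ?_)
    simp
  have hc2 := hc.trans ((Finset.card_union_le _ _).trans (Nat.add_le_add_left
    ((Finset.card_union_le _ _).trans (Nat.add_le_add h1 ((Finset.card_union_le _ _).trans
      (Nat.add_le_add (h2 u) (h2 v))))) _))
  have hc3 : ((Finset.univ.filter fun g : Fin (m+1) → V => (u :: (List.ofFn g ++ [v])).IsChain G.Adj).card : ℝ)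
    ≤ (LinkSet G u v (m+1)).card + ((m+1)^2 * (Fintype.card V : ℝ) ^ m + ((m+1) * (Fintype.card V : ℝ) ^ m + (m+1) * (Fintype.card V : ℝ) ^ m)) := by
    exact_mod_cast hc2
  linarith

lemma hitting {X I : Type*} [Fintype X] [Nonempty X] (J : Finset I) (T : I → Finset X) (c : ℝ)
    (hc1 : c ≤ 1) (hT : ∀ j ∈ J, c * Fintype.card X ≤ (T j).card) (t : ℕ) :
    ∃ H : Finset X, H.card ≤ t ∧
      ((J.filter fun j => Disjoint (T j) H).card : ℝ) ≤ (1 - c) ^ t * J.card := by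
  induction t with
  | zero => exact ⟨∅, by simp, by simp⟩
  | succ t ih =>
    obtain ⟨H, hH, hJ⟩ := ih
    set J' := J.filter fun j => Disjoint (T j) H with hJ'
    have hsum : ∑ x : X, ((J'.filter fun j => x ∈ T j).card : ℝ) = ∑ j ∈ J', ((T j).card : ℝ) := by
      have : ∀ x : X, ((J'.filter fun j => x ∈ T j).card : ℝ) = ∑ j ∈ J', if x ∈ T j then (1:ℝ) else 0 := by
        intro x; rw [Finset.sum_boole]
      simp_rw [this]
      rw [Finset.sum_comm]
      refine Finset.sum_congr rfl fun j _ => ?_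
      rw [Finset.sum_boole]; simp
    have hex : ∃ x ∈ (Finset.univ : Finset X), c * J'.card ≤ ((J'.filter fun j => x ∈ T j).card : ℝ) := by
      refine Finset.exists_le_of_sum_le Finset.univ_nonempty ?_
      rw [hsum, Finset.sum_const, nsmul_eq_mul, Finset.card_univ]
      calc (Fintype.card X : ℝ) * (c * J'.card) = ∑ j ∈ J', c * Fintype.card X := by
            rw [Finset.sum_const, nsmul_eq_mul]; ring
        _ ≤ _ := Finset.sum_le_sum fun j hj => hT j (Finset.mem_filter.1 hj).1
    obtain ⟨x, -, hx⟩ := hex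
    refine ⟨insert x H, (Finset.card_insert_le _ _).trans (by omega), ?_⟩
    have heq : (J.filter fun j => Disjoint (T j) (insert x H)) = J'.filter fun j => ¬ x ∈ T j := by
      ext j
      simp only [hJ', Finset.mem_filter, Finset.disjoint_insert_right]
      tauto
    rw [heq]
    have hsplit := Finset.card_filter_add_card_filter_not (s := J') (fun j => x ∈ T j)
    have hsplit' : ((J'.filter fun j => x ∈ T j).card : ℝ) + (J'.filter fun j => ¬ x ∈ T j).card = J'.card := by
      exact_mod_cast hsplit
    have : (1 - c) * (J'.card : ℝ) ≤ (1 - c) * ((1 - c) ^ t * J.card) :=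
      mul_le_mul_of_nonneg_left hJ (by linarith)
    rw [pow_succ]
    nlinarith

lemma hitting_all {X I : Type*} [Fintype X] [Nonempty X] (J : Finset I) (T : I → Finset X) (c : ℝ)
    (hc1 : c ≤ 1) (hT : ∀ j ∈ J, c * Fintype.card X ≤ (T j).card) (t : ℕ)
    (ht : (1 - c) ^ t * J.card < 1) :
    ∃ H : Finset X, H.card ≤ t ∧ ∀ j ∈ J, ∃ x ∈ T j, x ∈ H := by
  obtain ⟨H, hH, hJ⟩ := hitting J T c hc1 hT t
  refine ⟨H, hH, fun j hj => ?_⟩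
  by_contra hcon
  have h0 := hJ.trans_lt ht
  have h1 : (J.filter fun j => Disjoint (T j) H).card < 1 := by exact_mod_cast h0
  have h2 : 0 < (J.filter fun j => Disjoint (T j) H).card := by
    refine Finset.card_pos.2 ⟨j, Finset.mem_filter.2 ⟨hj, ?_⟩⟩
    rw [Finset.disjoint_left]
    intro x hx hxH
    exact hcon ⟨x, hx, hxH⟩
  omega

lemma linked {V : Type*} [Fintype V] [Nonempty V] (G : SimpleGraph V) (U : Finset V) (m : ℕ) (c : ℝ)
    (hc1 : c ≤ 1) (h : ∀ u ∈ U, ∀ v ∈ U, c * (Fintype.card V : ℝ) ^ m ≤ (LinkSet G u v m).card)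
    (t : ℕ) (ht : (1 - c) ^ t * (Fintype.card V : ℝ) ^ 2 < 1) :
    ∃ R : Finset V, R.card ≤ t * m ∧ ∀ u ∈ U, ∀ v ∈ U, ∃ g ∈ LinkSet G u v m, ∀ i, g i ∈ R := by
  have hU : ((U ×ˢ U).card : ℝ) ≤ (Fintype.card V : ℝ) ^ 2 := by
    rw [Finset.card_product, sq]
    have := Finset.card_le_univ U
    exact_mod_cast Nat.mul_le_mul this this
  have hX : (Fintype.card (Fin m → V) : ℝ) = (Fintype.card V : ℝ) ^ m := by
    rw [Fintype.card_fun, Fintype.card_fin]; push_cast; rfl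
  have hT : ∀ p ∈ U ×ˢ U, c * (Fintype.card (Fin m → V) : ℝ) ≤ ((fun p : V × V => LinkSet G p.1 p.2 m) p).card := by
    intro p hp
    rw [hX]
    exact h p.1 (Finset.mem_product.1 hp).1 p.2 (Finset.mem_product.1 hp).2
  obtain ⟨H, hH, hJ⟩ := hitting_all (X := Fin m → V) (I := V × V) (U ×ˢ U) (fun p => LinkSet G p.1 p.2 m) c hc1 hT t
    (lt_of_le_of_lt (mul_le_mul_of_nonneg_left hU (pow_nonneg (by linarith) _)) ht)
  refine ⟨H.biUnion fun g => Finset.univ.image g, ?_, ?_⟩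
  · refine (Finset.card_biUnion_le_card_mul _ _ m ?_).trans (Nat.mul_le_mul_right _ hH)
    intro g _
    exact Finset.card_image_le.trans (by simp)
  · intro u hu v hv
    obtain ⟨g, hg, hgH⟩ := hJ (u, v) (Finset.mem_product.2 ⟨hu, hv⟩)
    exact ⟨g, hg, fun i => Finset.mem_biUnion.2 ⟨g, hgH, Finset.mem_image_of_mem _ (Finset.mem_univ i)⟩⟩

/-- closed link gives a cycle -/
lemma cyc_of_link {V : Type*} [Fintype V] {G : SimpleGraph V} {u : V} {m : ℕ} (hm : 2 ≤ m)
    {g : Fin m → V} (hg : g ∈ LinkSet G u u m) : HasCyc G (m + 1) := by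
  simp only [LinkSet, Finset.mem_filter, Finset.mem_univ, true_and] at hg
  obtain ⟨hch, hinj, hne⟩ := hg
  rw [← List.cons_append, List.isChain_append] at hch
  have := HasCyc.of_list (G := G) (u :: List.ofFn g) hch.1 (by
    rw [List.nodup_cons, List.nodup_ofFn]
    refine ⟨?_, hinj⟩
    rw [List.mem_ofFn]
    rintro ⟨i, hi⟩
    exact (hne i).1 hi) (by simp; omega) (by simp) (by
      refine hch.2.2 _ ?_ _ ?_
      · exact List.getLast?_eq_getLast_of_ne_nil _
      · simp)
  simpa using this

lemma cyc_of_path_link {V : Type*} [Fintype V] {G : SimpleGraph V} {U R : Finset V} {m : ℕ}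
    (hm : 1 ≤ m) (hR : ∀ u ∈ U, ∀ v ∈ U, ∃ g ∈ LinkSet G u v m, ∀ i, g i ∈ R)
    {l : List V} (hl : PathIn G (U \ R) l) (hl2 : 2 ≤ l.length) : HasCyc G (l.length + m) := by
  have hne : l ≠ [] := by rintro rfl; simp at hl2
  have hmem : ∀ x ∈ l, x ∈ U ∧ x ∉ R := fun x hx => Finset.mem_sdiff.1 (hl.2.2 x hx)
  obtain ⟨g, hg, hgR⟩ := hR (l.getLast hne) (hmem _ (List.getLast_mem hne)).1 (l.head hne)
    (hmem _ (List.head_mem hne)).1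
  simp only [LinkSet, Finset.mem_filter, Finset.mem_univ, true_and] at hg
  obtain ⟨hch, hinj, -⟩ := hg
  have hgne : List.ofFn g ≠ [] := by
    intro h0
    have := congrArg List.length h0
    simp at this; omega
  rw [List.isChain_cons, List.isChain_append] at hch
  have := HasCyc.of_list (G := G) (l ++ List.ofFn g) (by
    rw [List.isChain_append]
    refine ⟨hl.1, hch.2.1, ?_⟩
    intro x hx y hy
    rw [List.getLast?_eq_getLast_of_ne_nil hne] at hx
    simp only [Option.mem_def, Option.some.injEq] at hx
    subst hx
    refine hch.1 y ?_
    rw [List.head?_append]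
    simp only [Option.mem_def] at hy ⊢
    rw [hy]; rfl) (by
    rw [List.nodup_append]
    refine ⟨hl.2.1, List.nodup_ofFn.2 hinj, ?_⟩
    intro a ha b hb hab
    subst hab
    rw [List.mem_ofFn] at hb
    obtain ⟨i, rfl⟩ := hb
    exact (hmem _ ha).2 (hgR i)) (by simp; omega) (by simp [hne]) (by
      rw [List.getLast_append_of_ne_nil _ hgne, List.head_append_of_ne_nil hne]
      refine hch.2.2.2 _ ?_ _ ?_
      · exact List.getLast?_eq_getLast_of_ne_nil _
      · simp)
  simpa using this

lemma e2_cast {V : Type*} (G : SimpleGraph V) (W : Finset V) :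
    (e2 G W : ℝ) = ∑ u ∈ W, ∑ v ∈ W, adj G u v := by
  unfold e2
  push_cast
  refine Finset.sum_congr rfl fun u _ => ?_
  unfold adj
  rw [Finset.sum_boole]

lemma e2_sdiff {V : Type*} [Fintype V] (G : SimpleGraph V) (U R : Finset V) :
    (e2 G U : ℝ) ≤ e2 G (U \ R) + 2 * R.card * Fintype.card V := by
  rw [e2_cast, e2_cast]
  have h1 : ∀ (f : V → ℝ), (∀ v, 0 ≤ f v) → (∀ v, f v ≤ Fintype.card V) →
     ∑ u ∈ U, f u ≤ ∑ u ∈ U \ R, f u + R.card * Fintype.card V := by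
    intro f hf hf2
    have h3 : ∑ u ∈ U, f u ≤ ∑ u ∈ (U \ R) ∪ R, f u := by
      refine Finset.sum_le_sum_of_subset_of_nonneg ?_ (fun v _ _ => hf v)
      intro v hv; simp; tauto
    rw [Finset.sum_union Finset.sdiff_disjoint] at h3
    refine h3.trans (add_le_add_right ?_ _)
    calc _ ≤ ∑ u ∈ R, (Fintype.card V : ℝ) := Finset.sum_le_sum fun v _ => hf2 v
      _ = _ := by simp
  have hadj : ∀ u (T : Finset V), ∑ v ∈ T, adj G u v ≤ Fintype.card V := by
    intro u T
    calc _ ≤ ∑ v ∈ T, (1:ℝ) := Finset.sum_le_sum fun v _ => adj_le_one G u v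
      _ ≤ _ := by simpa using Finset.card_le_univ T
  have h2 := h1 (fun u => ∑ v ∈ U, adj G u v) (fun u => Finset.sum_nonneg fun v _ => adj_nonneg G u v)
    (fun u => hadj u U)
  have h3 := h1 (fun v => ∑ u ∈ U \ R, adj G v u) (fun u => Finset.sum_nonneg fun v _ => adj_nonneg G u v)
    (fun u => hadj u _)
  have h4 : ∑ u ∈ U \ R, ∑ v ∈ U, adj G u v = ∑ v ∈ U, ∑ u ∈ U \ R, adj G v u := by
    rw [Finset.sum_comm]
    exact Finset.sum_congr rfl fun _ _ => Finset.sum_congr rfl fun _ _ => adj_comm G _ _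
  linarith

/-- long cycles from links -/
lemma long_cyc {V : Type*} [Fintype V] {G : SimpleGraph V} {U R : Finset V} {m l : ℕ}
    (hm : 1 ≤ m) (hR : ∀ u ∈ U, ∀ v ∈ U, ∃ g ∈ LinkSet G u v m, ∀ i, g i ∈ R)
    (hl : m + 2 ≤ l) (he : (l : ℝ) * Fintype.card V + 2 * R.card * Fintype.card V < e2 G U) :
    HasCyc G l := by
  have h1 := e2_sdiff G U R
  have h2 : ((l * (U \ R).card : ℕ) : ℝ) < e2 G (U \ R) := by
    have : ((U \ R).card : ℝ) ≤ Fintype.card V := by exact_mod_cast Finset.card_le_univ _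
    push_cast
    nlinarith [Nat.cast_nonneg (α := ℝ) l]
  obtain ⟨p, hp, hlen⟩ := erdos_gallai_path G l (U \ R) (by exact_mod_cast h2)
  have hp' : PathIn G (U \ R) (p.take (l - m)) := by
    refine ⟨hp.1.take _, hp.2.1.sublist (List.take_sublist _ _), fun x hx => hp.2.2 x (List.mem_of_mem_take hx)⟩
  have hlen' : (p.take (l - m)).length = l - m := by rw [List.length_take]; omega
  have := cyc_of_path_link hm hR hp' (by omega)
  rw [hlen'] at this
  convert this using 1
  omega

namespace Spec
variable {V : Type*} [Fintype V] {G : SimpleGraph V} (S : Spec G)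

lemma eig (i u : V) : ∑ v, adj G u v * S.b i v = S.lam i * S.b i u := by
  simp_rw [S.adj_eq, Finset.sum_mul]
  rw [Finset.sum_comm]
  have : ∀ j, ∑ v, S.lam j * (S.b j u * S.b j v) * S.b i v
      = S.lam j * S.b j u * (if j = i then 1 else 0) := by
    intro j
    rw [← S.orth j i, Finset.mul_sum]
    exact Finset.sum_congr rfl fun v _ => by ring
  simp_rw [this]
  simp

lemma sum_split (f : V → ℝ) : ∑ i, f i = f S.i0 + ∑ i ∈ Finset.univ.erase S.i0, f i := by
  rw [Finset.add_sum_erase _ _ (Finset.mem_univ _)]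

lemma sum_lam_sq_le : ∑ i, S.lam i ^ 2 ≤ S.rho * Fintype.card V := by
  rw [← S.sum_adj_eq]
  exact S.sum_adj_le Finset.univ (fun _ _ _ => Finset.mem_univ _)

lemma perron {δ : ℝ} (hδ : 0 < δ) (hρ : 0 < S.rho)
    (hgap : ∀ i, i ≠ S.i0 → |S.lam i| ≤ (1 - δ) * S.rho) (u v : V) :
    0 ≤ S.b S.i0 u * S.b S.i0 v := by
  set f : V → ℝ := fun u => |S.b S.i0 u| with hf
  have hnf : ∑ u, f u ^ 2 = 1 := by simp [hf, S.norm_b]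
  have hq : S.rho ≤ quad G f := by
    have := abs_quad_le (G := G) (S.b S.i0)
    rw [S.quad_b] at this
    exact (le_abs_self _).trans this
  have hsum : ∑ i, (S.rho - S.lam i) * S.co i f ^ 2 ≤ 0 := by
    have h1 := S.norm_eq f
    rw [hnf] at h1
    rw [S.quad_eq] at hq
    simp_rw [sub_mul]
    rw [Finset.sum_sub_distrib, ← Finset.mul_sum, ← h1]
    linarith
  have hz : ∀ i, i ≠ S.i0 → S.co i f = 0 := by
    intro i hi
    have hnn : ∀ j ∈ (Finset.univ : Finset V), 0 ≤ (S.rho - S.lam j) * S.co j f ^ 2 := fun j _ =>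
      mul_nonneg (sub_nonneg.2 (S.hmax j)) (sq_nonneg _)
    have h0 : ∑ i, (S.rho - S.lam i) * S.co i f ^ 2 = 0 := le_antisymm hsum (Finset.sum_nonneg hnn)
    have h2 := (Finset.sum_eq_zero_iff_of_nonneg hnn).1 h0 i (Finset.mem_univ _)
    have h3 : 0 < S.rho - S.lam i := by
      have := (le_abs_self _).trans (hgap i hi)
      nlinarith
    have h4 : S.co i f ^ 2 = 0 := by
      rcases mul_eq_zero.1 h2 with h | h
      · linarith
      · exact h
    exact pow_eq_zero_iff (two_ne_zero) |>.1 h4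
  have hfu : ∀ u, f u = S.co S.i0 f * S.b S.i0 u := by
    intro u
    conv_lhs => rw [S.expand f u]
    refine Finset.sum_eq_single _ (fun i _ hi => by rw [hz i hi, zero_mul]) (fun h => absurd (Finset.mem_univ _) h)
  have hs : S.co S.i0 f ^ 2 = 1 := by
    rw [← hnf, S.norm_eq f]
    symm
    refine Finset.sum_eq_single S.i0 (fun i _ hi => ?_) (fun h => absurd (Finset.mem_univ _) h)
    rw [hz i hi]; norm_num
  have h1 : f u * f v = S.b S.i0 u * S.b S.i0 v := by
    rw [hfu, hfu]
    linear_combination (S.b S.i0 u * S.b S.i0 v) * hs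
  rw [← h1]
  exact mul_nonneg (abs_nonneg _) (abs_nonneg _)

lemma deg_le (u : V) : ∑ v, adj G u v ≤ Fintype.card V := by
  calc _ ≤ ∑ v : V, (1:ℝ) := Finset.sum_le_sum fun v _ => adj_le_one G u v
    _ = _ := by simp

lemma pow_lower {δ : ℝ} (hδ1 : δ < 1)
    (hgap : ∀ i, i ≠ S.i0 → |S.lam i| ≤ (1 - δ) * S.rho) (m : ℕ) (u v : V) :
    S.rho ^ (m+2) * (S.b S.i0 u * S.b S.i0 v) - ((1 - δ) * S.rho) ^ m * Fintype.card V ≤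
      ((G.adjMatrix ℝ) ^ (m+2)) u v := by
  rw [S.pow, S.sum_split]
  have hK : 0 ≤ ((1 - δ) * S.rho) ^ m := pow_nonneg (mul_nonneg (by linarith) S.rho_nonneg) _
  have h1 : ∀ i ∈ Finset.univ.erase S.i0, -(((1 - δ) * S.rho) ^ m *
      ((S.lam i ^ 2 * S.b i u ^ 2 + S.lam i ^ 2 * S.b i v ^ 2) / 2)) ≤ S.lam i ^ (m+2) * (S.b i u * S.b i v) := by
    intro i hi
    have hi' := hgap i (Finset.ne_of_mem_erase hi)
    refine neg_le_of_abs_le ?_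
    rw [pow_add, mul_assoc, abs_mul, abs_pow]
    refine mul_le_mul (pow_le_pow_left₀ (abs_nonneg _) hi' m) ?_ (abs_nonneg _) hK
    rw [abs_mul, abs_of_nonneg (sq_nonneg (S.lam i)), ← mul_add, mul_div_assoc]
    refine mul_le_mul_of_nonneg_left ?_ (sq_nonneg _)
    rw [abs_le]; constructor <;> nlinarith [sq_nonneg (S.b i u + S.b i v), sq_nonneg (S.b i u - S.b i v)]
  have h2 := Finset.sum_le_sum h1
  rw [Finset.sum_neg_distrib, ← Finset.mul_sum] at h2
  have h3 : ∑ i ∈ Finset.univ.erase S.i0, (S.lam i ^ 2 * S.b i u ^ 2 + S.lam i ^ 2 * S.b i v ^ 2) / 2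
      ≤ (Fintype.card V : ℝ) := by
    have h4 : ∑ i ∈ Finset.univ.erase S.i0, (S.lam i ^ 2 * S.b i u ^ 2 + S.lam i ^ 2 * S.b i v ^ 2) / 2
       ≤ ∑ i, (S.lam i ^ 2 * S.b i u ^ 2 + S.lam i ^ 2 * S.b i v ^ 2) / 2 :=
      Finset.sum_le_sum_of_subset_of_nonneg (Finset.erase_subset _ _) (fun i _ _ => by positivity)
    have h6 : ∑ i, (S.lam i ^ 2 * S.b i u ^ 2 + S.lam i ^ 2 * S.b i v ^ 2) / 2
        = (∑ w, adj G u w + ∑ w, adj G v w) / 2 := by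
      rw [← Finset.sum_div, Finset.sum_add_distrib, ← S.deg_eq, ← S.deg_eq]
    rw [h6] at h4
    have := deg_le (G := G) u
    have := deg_le (G := G) v
    linarith
  have h5 := mul_le_mul_of_nonneg_left h3 hK
  unfold rho at *
  linarith

lemma trace_lower {δ : ℝ} (hδ0 : 0 < δ) (hδ1 : δ < 1)
    (hgap : ∀ i, i ≠ S.i0 → |S.lam i| ≤ (1 - δ) * S.rho) (hn : (Fintype.card V : ℝ) ≤ (2 + δ/2) * S.rho)
    (m : ℕ) (hm : 1 ≤ m) :
    δ / 2 * S.rho ^ (m+2) ≤ ∑ u, ((G.adjMatrix ℝ) ^ (m+2)) u u := by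
  rw [S.trace_pow, S.sum_split]
  have hρ := S.rho_nonneg
  have hK : 0 ≤ ((1 - δ) * S.rho) ^ m := pow_nonneg (mul_nonneg (by linarith) S.rho_nonneg) _
  have h1 : ∀ i ∈ Finset.univ.erase S.i0, -(((1 - δ) * S.rho) ^ m * S.lam i ^ 2) ≤ S.lam i ^ (m+2) := by
    intro i hi
    have hi' := hgap i (Finset.ne_of_mem_erase hi)
    refine neg_le_of_abs_le ?_
    rw [pow_add, abs_mul, abs_pow, abs_of_nonneg (sq_nonneg (S.lam i))]
    exact mul_le_mul_of_nonneg_right (pow_le_pow_left₀ (abs_nonneg _) hi' m) (sq_nonneg _)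
  have h2 := Finset.sum_le_sum h1
  rw [Finset.sum_neg_distrib, ← Finset.mul_sum] at h2
  have h3 := S.sum_lam_sq_le
  rw [S.sum_split] at h3
  have h4 : ((1 - δ) * S.rho) ^ m ≤ (1 - δ) * S.rho ^ m := by
    rw [mul_pow]
    refine mul_le_mul_of_nonneg_right ?_ (pow_nonneg hρ _)
    exact pow_le_of_le_one (by linarith) (by linarith) (by omega)
  have h5 : ∑ i ∈ Finset.univ.erase S.i0, S.lam i ^ 2 ≤ (1 + δ/2) * S.rho ^ 2 := by
    change S.rho ^ 2 + _ ≤ _ at h3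
    nlinarith
  have h6 : ((1 - δ) * S.rho) ^ m * ∑ i ∈ Finset.univ.erase S.i0, S.lam i ^ 2 ≤
      ((1 - δ) * S.rho ^ m) * ((1 + δ/2) * S.rho ^ 2) :=
    mul_le_mul h4 h5 (Finset.sum_nonneg fun i _ => sq_nonneg _) (mul_nonneg (by linarith) (pow_nonneg hρ _))
  have h7 : ((1 - δ) * S.rho ^ m) * ((1 + δ/2) * S.rho ^ 2) = (1 - δ/2 - δ^2/2) * S.rho ^ (m+2) := by ring
  have h8 : 0 ≤ δ^2/2 * S.rho ^ (m+2) := by positivity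
  change _ ≤ S.rho ^ (m+2) + _
  linarith

lemma short_cyc {δ : ℝ} (hδ0 : 0 < δ) (hδ1 : δ < 1)
    (hgap : ∀ i, i ≠ S.i0 → |S.lam i| ≤ (1 - δ) * S.rho) (hn : (Fintype.card V : ℝ) ≤ (2 + δ/2) * S.rho)
    (m : ℕ) (hm : 1 ≤ m)
    (hbig : ((m+1)^2 + 2*(m+1)) * 3 ^ (m+2) * 2 < δ * Fintype.card V) : HasCyc G (m+2) := by
  by_contra hcon
  have hempty : ∀ v, ((G.adjMatrix ℝ) ^ (m + 2)) v v ≤ ((m+1)^2 + 2*(m+1)) * (Fintype.card V : ℝ) ^ m := by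
    intro v
    have h1 := link_card G m v v
    have h2 : LinkSet G v v (m+1) = ∅ := by
      by_contra hne
      obtain ⟨g, hg⟩ := Finset.nonempty_iff_ne_empty.2 hne
      exact hcon (cyc_of_link (by omega) hg)
    rw [h2] at h1
    simp only [Finset.card_empty, Nat.cast_zero] at h1
    linarith
  have h1 := S.trace_lower hδ0 hδ1 hgap hn m hm
  have h2 := Finset.sum_le_sum fun v (_ : v ∈ Finset.univ) => hempty v
  rw [Finset.sum_const, nsmul_eq_mul, Finset.card_univ] at h2
  have hρ := S.rho_nonneg
  set n : ℝ := (Fintype.card V : ℝ) with hnn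
  have hnpos : 0 < n := by
    have : (0:ℝ) ≤ ((m+1)^2 + 2*(m+1)) * 3 ^ (m+2) * 2 := by positivity
    nlinarith
  have h3 : (n / 3) ^ (m+2) ≤ S.rho ^ (m+2) := pow_le_pow_left₀ (by positivity) (by nlinarith) _
  rw [div_pow, div_le_iff₀ (by positivity)] at h3
  have h4 : n * (((m+1)^2 + 2*(m+1)) * n ^ m) * (2 * 3 ^ (m+2)) < δ * n ^ (m+2) := by
    have : 0 < n ^ (m+1) := by positivity
    calc n * (((m+1)^2 + 2*(m+1)) * n ^ m) * (2 * 3 ^ (m+2)) = (((m+1)^2 + 2*(m+1)) * 3 ^ (m+2) * 2) * n ^ (m+1) := by ring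
      _ < (δ * n) * n ^ (m+1) := mul_lt_mul_of_pos_right hbig this
      _ = _ := by ring
  have h5 := h1.trans h2
  have h6 : δ * n ^ (m+2) ≤ δ * (S.rho ^ (m+2) * 3 ^ (m+2)) := mul_le_mul_of_nonneg_left h3 hδ0.le
  have h7 := mul_le_mul_of_nonneg_right h5 (show (0:ℝ) ≤ 2 * 3 ^ (m+2) by positivity)
  linarith

end Spec

namespace Spec
variable {V : Type*} [Fintype V] {G : SimpleGraph V} (S : Spec G)

/-- the set of vertices with substantial Perron weight -/
noncomputable def heavy (κ : ℝ) : Finset V :=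
  Finset.univ.filter fun u => κ ≤ Fintype.card V * S.b S.i0 u ^ 2

lemma heavy_e2 {κ : ℝ} (hκ0 : 0 < κ) (hκ1 : κ ≤ 1 / 2) (hn : 0 < (Fintype.card V : ℝ))
    (hpos : ∀ u v, 0 ≤ S.b S.i0 u * S.b S.i0 v) :
    (1 - 4 * κ) * S.rho ^ 2 ≤ e2 G (S.heavy κ) := by
  set x := S.b S.i0 with hx
  set U := S.heavy κ with hU
  have hρ := S.rho_nonneg
  have hlight : ∑ u ∈ Uᶜ, x u ^ 2 ≤ κ := by
    have h1 : ∀ u ∈ Uᶜ, x u ^ 2 ≤ κ / Fintype.card V := by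
      intro u hu
      have : ¬ (κ ≤ Fintype.card V * x u ^ 2) := by
        simpa [hU, heavy] using hu
      rw [le_div_iff₀ hn]; linarith
    calc _ ≤ ∑ u ∈ Uᶜ, κ / Fintype.card V := Finset.sum_le_sum h1
      _ = (Uᶜ.card : ℝ) * (κ / Fintype.card V) := by rw [Finset.sum_const, nsmul_eq_mul]
      _ ≤ (Fintype.card V : ℝ) * (κ / Fintype.card V) :=
          mul_le_mul_of_nonneg_right (by exact_mod_cast Finset.card_le_univ _) (by positivity)
      _ = κ := by field_simp
  have hnn : ∀ u v, 0 ≤ adj G u v * (x u * x v) := fun u v => mul_nonneg (adj_nonneg G u v) (hpos u v)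
  have hrow : ∀ u, ∑ v, adj G u v * (x u * x v) = S.rho * x u ^ 2 := by
    intro u
    have := S.eig S.i0 u
    calc _ = x u * ∑ v, adj G u v * x v := by
          rw [Finset.mul_sum]; exact Finset.sum_congr rfl fun v _ => by ring
      _ = _ := by rw [this]; unfold rho; ring
  have hq : S.rho = ∑ u, ∑ v, adj G u v * (x u * x v) := (S.quad_b S.i0).symm
  have h1 : ∑ u, ∑ v, adj G u v * (x u * x v) = ∑ u ∈ U, ∑ v, adj G u v * (x u * x v)
      + ∑ u ∈ Uᶜ, ∑ v, adj G u v * (x u * x v) := (Finset.sum_add_sum_compl U _).symm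
  have h2 : ∑ u ∈ Uᶜ, ∑ v, adj G u v * (x u * x v) ≤ S.rho * κ := by
    simp_rw [hrow]
    rw [← Finset.mul_sum]
    exact mul_le_mul_of_nonneg_left hlight hρ
  have h3 : ∑ u ∈ U, ∑ v, adj G u v * (x u * x v) ≤
      ∑ u ∈ U, ∑ v ∈ U, adj G u v * (x u * x v) + S.rho * κ := by
    have h4 : ∑ u ∈ U, ∑ v, adj G u v * (x u * x v) =
      ∑ u ∈ U, ∑ v ∈ U, adj G u v * (x u * x v) + ∑ u ∈ U, ∑ v ∈ Uᶜ, adj G u v * (x u * x v) := by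
      rw [← Finset.sum_add_distrib]
      exact Finset.sum_congr rfl fun u _ => (Finset.sum_add_sum_compl U _).symm
    rw [h4]
    have h5 : ∑ u ∈ U, ∑ v ∈ Uᶜ, adj G u v * (x u * x v) ≤ S.rho * κ := by
      refine le_trans ?_ h2
      rw [Finset.sum_comm]
      refine Finset.sum_le_sum fun v _ => ?_
      refine (Finset.sum_le_sum_of_subset_of_nonneg (Finset.subset_univ U) (fun u _ _ => hnn u v)).trans ?_
      refine le_of_eq (Finset.sum_congr rfl fun u _ => ?_)
      rw [_root_.adj_comm G]; ring
    linarith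
  set E := ∑ u ∈ U, ∑ v ∈ U, adj G u v * (x u * x v) with hE
  have h6 : S.rho * (1 - 2 * κ) ≤ E := by linarith
  have h7 : E ^ 2 ≤ (e2 G U : ℝ) * 1 := by
    have hcs := Finset.sum_mul_sq_le_sq_mul_sq (U ×ˢ U) (fun p => adj G p.1 p.2) (fun p => x p.1 * x p.2)
    rw [Finset.sum_product] at hcs
    refine hcs.trans ?_
    refine mul_le_mul ?_ ?_ (Finset.sum_nonneg fun _ _ => sq_nonneg _) (Nat.cast_nonneg _)
    · simp_rw [adj_sq]; rw [Finset.sum_product, e2_cast]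
    · simp_rw [mul_pow]
      rw [Finset.sum_product]
      simp_rw [← Finset.mul_sum]
      rw [← Finset.sum_mul]
      have h8 : ∑ u ∈ U, x u ^ 2 ≤ 1 := by
        rw [← S.norm_b S.i0]
        exact Finset.sum_le_sum_of_subset_of_nonneg (Finset.subset_univ U) (fun u _ _ => sq_nonneg _)
      exact mul_le_one₀ h8 (Finset.sum_nonneg fun _ _ => sq_nonneg _) h8
  have h9 : (S.rho * (1 - 2 * κ)) ^ 2 ≤ E ^ 2 :=
    pow_le_pow_left₀ (mul_nonneg hρ (by linarith)) h6 2
  nlinarith [sq_nonneg (S.rho * κ)]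

lemma heavy_link {δ κ : ℝ} (hδ0 : 0 < δ) (hδ1 : δ < 1) (hκ0 : 0 < κ)
    (hρ : 0 < S.rho)
    (hgap : ∀ i, i ≠ S.i0 → |S.lam i| ≤ (1 - δ) * S.rho) (hn3 : (Fintype.card V : ℝ) ≤ 3 * S.rho)
    (m : ℕ) (hm : (1 - δ) ^ m ≤ κ / 18)
    (hbig : ((m+1)^2 + 2*(m+1)) ≤ κ / (4 * 3 ^ (m+2)) * Fintype.card V)
    (u v : V) (hu : u ∈ S.heavy κ) (hv : v ∈ S.heavy κ) :
    κ / (4 * 3 ^ (m+2)) * (Fintype.card V : ℝ) ^ (m+1) ≤ (LinkSet G u v (m+1)).card := by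
  have h1 := link_card G m u v
  have h2 := S.pow_lower hδ1 hgap m u v
  have hpos := S.perron hδ0 hρ hgap u v
  simp only [heavy, Finset.mem_filter, Finset.mem_univ, true_and] at hu hv
  set n : ℝ := (Fintype.card V : ℝ) with hnn
  have hn0 : 0 < n := by
    by_contra h
    have : n = 0 := le_antisymm (not_lt.1 h) (Nat.cast_nonneg _)
    rw [this] at hu; linarith
  set x := S.b S.i0
  have h3 : κ / n ≤ x u * x v := by
    refine le_of_sq_le_sq ?_ hpos
    rw [div_pow, div_le_iff₀ (by positivity)]
    have := mul_le_mul hu hv hκ0.le (by positivity)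
    nlinarith
  have h4 : S.rho ^ (m+2) * (κ / n) ≤ S.rho ^ (m+2) * (x u * x v) :=
    mul_le_mul_of_nonneg_left h3 (by positivity)
  have h5 : ((1 - δ) * S.rho) ^ m * n ≤ S.rho ^ (m+2) * (κ / n) / 2 := by
    rw [mul_pow]
    have h6 : (1 - δ) ^ m * S.rho ^ m * n ≤ κ / 18 * S.rho ^ m * n := by gcongr
    refine h6.trans ?_
    have h7 : n ^ 2 ≤ 9 * S.rho ^ 2 := by nlinarith
    rw [pow_add, ← mul_div_assoc, div_div, le_div_iff₀ (by positivity)]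
    have h8 : 0 ≤ κ * S.rho ^ m := by positivity
    nlinarith
  have h6 : (n / 3) ^ (m+2) ≤ S.rho ^ (m+2) := pow_le_pow_left₀ (by positivity) (by linarith) _
  have h7 : κ / (4 * 3 ^ (m+2)) * n ^ (m+1) * 2 ≤ S.rho ^ (m+2) * (κ / n) / 2 := by
    calc κ / (4 * 3 ^ (m+2)) * n ^ (m+1) * 2 = (n/3) ^ (m+2) * (κ / n) / 2 := by
          rw [div_pow]; field_simp; ring
      _ ≤ _ := by gcongr
  have h8 : ((m+1)^2 + 2*(m+1)) * n ^ m ≤ κ / (4 * 3 ^ (m+2)) * n ^ (m+1) := by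
    calc ((m+1)^2 + 2*(m+1)) * n ^ m ≤ (κ / (4 * 3 ^ (m+2)) * n) * n ^ m :=
          mul_le_mul_of_nonneg_right hbig (by positivity)
      _ = _ := by ring
  linarith

end Spec

lemma exists_t (r a : ℝ) (hr0 : 0 ≤ r) (hr1 : r < 1) (ha : 0 < a) :
    ∃ N : ℕ, ∀ n : ℕ, N ≤ n → ∃ t : ℕ, (t : ℝ) ≤ a * n ∧ r ^ t * (n : ℝ) ^ 2 < 1 := by
  have h1 : Filter.Tendsto (fun t : ℕ => (t : ℝ) ^ 2 * r ^ t) Filter.atTop (nhds 0) :=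
    tendsto_pow_const_mul_const_pow_of_abs_lt_one 2 (by rwa [abs_of_nonneg hr0])
  have h2 : ∀ᶠ t : ℕ in Filter.atTop, (t : ℝ) ^ 2 * r ^ t < a ^ 2 / 4 :=
    h1.eventually (gt_mem_nhds (by positivity))
  have h3 : Filter.Tendsto (fun n : ℕ => ⌊a * (n : ℝ)⌋₊) Filter.atTop Filter.atTop :=
    tendsto_nat_floor_atTop.comp ((tendsto_natCast_atTop_atTop).const_mul_atTop ha)
  have h4 := h3.eventually (h2.and (Filter.eventually_ge_atTop 1))
  obtain ⟨N, hN⟩ := Filter.eventually_atTop.1 h4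
  refine ⟨N, fun n hn => ⟨⌊a * (n : ℝ)⌋₊, Nat.floor_le (by positivity), ?_⟩⟩
  obtain ⟨h5, h6⟩ := hN n hn
  set t := ⌊a * (n : ℝ)⌋₊
  have h7 : a * n < t + 1 := Nat.lt_floor_add_one _
  have h8 : (1 : ℝ) ≤ t := by exact_mod_cast h6
  have h9 : a * n ≤ 2 * t := by linarith
  have h10 : (a * n) ^ 2 ≤ (2 * t) ^ 2 := pow_le_pow_left₀ (by positivity) h9 2
  have h11 : (a * n) ^ 2 * r ^ t ≤ (2 * t) ^ 2 * r ^ t := mul_le_mul_of_nonneg_right h10 (by positivity)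
  have h12 : a ^ 2 * (r ^ t * (n : ℝ) ^ 2) < a ^ 2 * 1 := by nlinarith
  exact lt_of_mul_lt_mul_left h12 (by positivity)

lemma gap_lemma (δ η : ℝ) (hδ0 : 0 < δ) (hδ1 : δ < 1) (hη0 : 0 < η) (hη1 : η < 1) :
    ∃ N : ℕ, ∀ (V : Type) (_ : Fintype V) (G : SimpleGraph V) (S : Spec G), N ≤ Fintype.card V →
      (∀ i, i ≠ S.i0 → |S.lam i| ≤ (1 - δ) * S.rho) →
      ((Fintype.card V : ℝ) ≤ (2 + δ/2) * S.rho) →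
      ∀ l : ℕ, 3 ≤ l → (l : ℝ) * Fintype.card V ≤ (1 - η) * S.rho ^ 2 → HasCyc G l := by
  obtain ⟨m, hm⟩ := exists_pow_lt_of_lt_one (show 0 < η / 8 / 18 by positivity) (show 1 - δ < 1 by linarith)
  set κ := η / 8 with hκ
  set c0 := κ / (4 * 3 ^ (m+2)) with hc0
  have hc0pos : 0 < c0 := by positivity
  have hc01 : c0 ≤ 1 := by
    rw [hc0, div_le_one (by positivity)]
    have : (1:ℝ) ≤ 3 ^ (m+2) := one_le_pow₀ (by norm_num)
    linarith
  obtain ⟨N1, hN1⟩ := exists_t (1 - c0) (η / 40 / (m+1)) (by linarith) (by linarith) (by positivity)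
  obtain ⟨N2, hN2⟩ := exists_nat_gt (((m+1)^2 + 2*(m+1)) * 3 ^ (m+2) * 2 / δ : ℝ)
  obtain ⟨N3, hN3⟩ := exists_nat_gt (((m+1)^2 + 2*(m+1)) / c0 : ℝ)
  refine ⟨max (max N1 N2) (max N3 1), ?_⟩
  intro V _ G S hN hgap hn l hl hlong
  have hNN1 : N1 ≤ Fintype.card V := by omega
  have hNN2 : (N2 : ℝ) ≤ Fintype.card V := by norm_cast; omega
  have hNN3 : (N3 : ℝ) ≤ Fintype.card V := by norm_cast; omega
  have hpos : (0:ℝ) < Fintype.card V := by norm_cast; omega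
  have hρ : 0 < S.rho := by
    have := S.rho_nonneg
    rcases this.eq_or_lt with h | h
    · rw [← h] at hn; linarith
    · exact h
  have : Nonempty V := ⟨S.i0⟩
  have hn3 : (Fintype.card V : ℝ) ≤ 3 * S.rho := by nlinarith
  by_cases hlm : l ≤ m + 2
  · obtain ⟨k, rfl⟩ : ∃ k, l = k + 2 := ⟨l - 2, by omega⟩
    refine S.short_cyc hδ0 hδ1 hgap hn k (by omega) ?_
    have h1 : ((m+1)^2 + 2*(m+1)) * 3 ^ (m+2) * 2 < δ * Fintype.card V := by
      have := hN2.trans_le hNN2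
      rw [div_lt_iff₀ hδ0] at this
      linarith
    refine lt_of_le_of_lt ?_ h1
    have hk : (k : ℝ) ≤ m := by norm_cast; omega
    have hk' : (3:ℝ) ^ (k+2) ≤ 3 ^ (m+2) := pow_le_pow_right₀ (by norm_num) (by omega)
    gcongr
  · have hbig : ((m+1)^2 + 2*(m+1)) ≤ c0 * Fintype.card V := by
      have := hN3.trans_le hNN3
      rw [div_lt_iff₀ hc0pos] at this
      linarith
    obtain ⟨t, ht1, ht2⟩ := hN1 _ hNN1
    obtain ⟨R, hR, hlink⟩ := linked G (S.heavy κ) (m+1) c0 hc01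
      (fun u hu v hv => S.heavy_link hδ0 hδ1 (by positivity) hρ hgap hn3 m hm.le hbig u v hu hv) t ht2
    refine long_cyc (by omega) hlink (by omega) ?_
    have he := S.heavy_e2 (κ := κ) (by positivity) (by linarith) hpos (S.perron hδ0 hρ hgap)
    refine lt_of_lt_of_le ?_ he
    have hRr : (R.card : ℝ) ≤ η / 40 * Fintype.card V := by
      have h1 : (R.card : ℝ) ≤ t * (m+1) := by exact_mod_cast hR
      refine h1.trans ?_
      calc (t : ℝ) * (m+1) ≤ (η / 40 / (m+1) * Fintype.card V) * (m+1) :=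
            mul_le_mul_of_nonneg_right ht1 (by positivity)
        _ = _ := by field_simp
    have h2 : 2 * (R.card : ℝ) * Fintype.card V ≤ 18 * (η / 40) * S.rho ^ 2 := by
      have h3 : (Fintype.card V : ℝ) ^ 2 ≤ 9 * S.rho ^ 2 := by nlinarith
      have h4 : (R.card : ℝ) * Fintype.card V ≤ η / 40 * Fintype.card V * Fintype.card V :=
        mul_le_mul_of_nonneg_right hRr hpos.le
      nlinarith
    have h5 : 0 < η * S.rho ^ 2 := by positivity
    rw [hκ]
    nlinarith

/-- restriction of a graph to the vertices where `f` is positive -/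
def posGraph {V : Type*} (G : SimpleGraph V) (f : V → ℝ) : SimpleGraph V where
  Adj u v := G.Adj u v ∧ 0 < f u ∧ 0 < f v
  symm := ⟨fun _ _ h => ⟨h.1.symm, h.2.2, h.2.1⟩⟩
  loopless := ⟨fun _ h => G.irrefl h.1⟩

lemma HasCyc.mono {V : Type*} {G H : SimpleGraph V} (h : H ≤ G) {l : ℕ} (hc : HasCyc H l) : HasCyc G l := by
  obtain ⟨v, c, hc, hl⟩ := hc
  exact ⟨v, c.mapLe h, hc.mapLe h, by simpa using hl⟩

lemma restrict_spec {V : Type*} [Fintype V] [Nonempty V] {G : SimpleGraph V} (f : V → ℝ) (τ : ℝ)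
    (hf : ∀ u, 0 ≤ f u) (hf1 : 0 < ∑ u, f u ^ 2) (hq : τ * ∑ u, f u ^ 2 ≤ quad G f)
    (hτ : 0 < τ) (hW : ((Finset.univ.filter fun u => 0 < f u).card : ℝ) ≤ 1.8 * τ) :
    ∃ (H : SimpleGraph V) (S : Spec H), H ≤ G ∧ τ ≤ S.rho ∧
      ∀ i, i ≠ S.i0 → |S.lam i| ≤ (1 - 1/10) * S.rho := by
  obtain ⟨S⟩ := exists_spec (posGraph G f)
  have hqq : quad (posGraph G f) f = quad G f := by
    unfold quad
    refine Finset.sum_congr rfl fun u _ => Finset.sum_congr rfl fun v _ => ?_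
    rcases (hf u).eq_or_lt with h | h
    · rw [← h]; simp
    rcases (hf v).eq_or_lt with h' | h'
    · rw [← h']; simp
    unfold adj posGraph
    simp [h, h']
  have hρ : τ ≤ S.rho := by
    have := S.quad_le f
    rw [hqq] at this
    exact le_of_mul_le_mul_right (hq.trans this) hf1
  refine ⟨_, S, fun u v h => h.1, hρ, ?_⟩
  intro i hi
  have h1 := S.sum_adj_le (Finset.univ.filter fun u => 0 < f u) (fun u v h => by simpa using h.2.1)
  rw [S.sum_adj_eq, S.sum_split] at h1
  have h2 : S.lam i ^ 2 ≤ ∑ i ∈ Finset.univ.erase S.i0, S.lam i ^ 2 :=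
    Finset.single_le_sum (f := fun i => S.lam i ^ 2) (fun _ _ => sq_nonneg _) (Finset.mem_erase.2 ⟨hi, Finset.mem_univ _⟩)
  change S.rho ^ 2 + _ ≤ _ at h1
  have h3 : S.lam i ^ 2 ≤ ((1 - 1/10) * S.rho) ^ 2 := by
    nlinarith
  exact abs_le_of_sq_le_sq h3 (by nlinarith)

lemma exists_rot (s t : ℝ) : ∃ α β : ℝ, α ^ 2 + β ^ 2 = 1 ∧ α * s + β * t = 0 := by
  by_cases h : s ^ 2 + t ^ 2 = 0
  · have hs : s = 0 := by nlinarith [sq_nonneg s, sq_nonneg t]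
    have ht : t = 0 := by nlinarith [sq_nonneg s, sq_nonneg t]
    exact ⟨1, 0, by norm_num, by rw [hs, ht]; ring⟩
  · have hpos : 0 < s ^ 2 + t ^ 2 := lt_of_le_of_ne (by positivity) (Ne.symm h)
    have hr := Real.sq_sqrt hpos.le
    have hr0 := Real.sqrt_pos.2 hpos
    set r := Real.sqrt (s ^ 2 + t ^ 2)
    refine ⟨t / r, -s / r, ?_, ?_⟩
    · rw [div_pow, div_pow, ← add_div, hr, div_eq_one_iff_eq h]; ring
    · field_simp; ring

lemma supp_arith (n τ a b : ℝ) (hn0 : 0 < n) (hτ0 : 0 < τ) (hτ1 : n ≤ 2.0213 * τ)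
    (hab : a + b ≤ n) (hb : 1 / 2 ≤ n / τ ^ 2 * b) : a ≤ 1.8 * τ := by
  rw [div_mul_eq_mul_div, le_div_iff₀ (by positivity)] at hb
  have h1 : n ^ 2 ≤ (2.0213 * τ) ^ 2 := pow_le_pow_left₀ hn0.le hτ1 2
  have h3 : n * (0.122 * n) ≤ n * b := by
    have : n * (0.122 * n) = 0.122 * n ^ 2 := by ring
    rw [this]
    have h4 : (2.0213 * τ) ^ 2 = 2.0213 ^ 2 * τ ^ 2 := by ring
    rw [h4] at h1
    have h5 := sq_nonneg τ
    norm_num at *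
    linarith
  have hb' := le_of_mul_le_mul_left h3 hn0
  norm_num at *
  linarith

set_option maxHeartbeats 1000000 in
lemma caseB1 {V : Type*} [Fintype V] {G : SimpleGraph V} (S : Spec G) {δ : ℝ} (hδ0 : 0 < δ) (hδ1 : δ ≤ 1 / 100)
    (hn0 : 0 < (Fintype.card V : ℝ))
    (hn : (Fintype.card V : ℝ) ≤ 2.001 * S.rho) (i1 : V) (hi1 : i1 ≠ S.i0) (hl : (1 - δ) * S.rho ≤ S.lam i1) :
    ∃ (H : SimpleGraph V) (T : Spec H), H ≤ G ∧ (1 - δ) * S.rho ≤ T.rho ∧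
      ∀ i, i ≠ T.i0 → |T.lam i| ≤ (1 - 1/10) * T.rho := by
  have : Nonempty V := ⟨S.i0⟩
  have hρ : 0 < S.rho := by nlinarith
  obtain ⟨α, β, hαβ, hsum⟩ := exists_rot (∑ u, S.b S.i0 u) (∑ u, S.b i1 u)
  set w : V → ℝ := fun u => α * S.b S.i0 u + β * S.b i1 u with hw
  set τ := (1 - δ) * S.rho with hτ
  have hτ0 : 0 < τ := by apply mul_pos _ hρ; linarith
  have hτ1 : (Fintype.card V : ℝ) ≤ 2.0213 * τ := by
    rw [hτ]; nlinarith
  have hwsum : ∑ u, w u = 0 := by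
    rw [hw, Finset.sum_add_distrib, ← Finset.mul_sum, ← Finset.mul_sum, hsum]
  have hco : ∀ i, S.co i w ^ 2 = α ^ 2 * (if i = S.i0 then 1 else 0) + β ^ 2 * (if i = i1 then 1 else 0) := by
    intro i
    have : S.co i w = α * (if i = S.i0 then 1 else 0) + β * (if i = i1 then 1 else 0) := by
      rw [← S.co_b, ← S.co_b]
      unfold Spec.co
      rw [Finset.mul_sum, Finset.mul_sum, ← Finset.sum_add_distrib]
      exact Finset.sum_congr rfl fun u _ => by rw [hw]; ring
    rw [this]
    by_cases h : i = S.i0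
    · have h' : i ≠ i1 := fun h' => hi1 (h'.symm.trans h)
      simp [h, Ne.symm hi1]
    · simp [h]
  have hnorm : ∑ u, w u ^ 2 = 1 := by
    rw [S.norm_eq]
    simp_rw [hco]
    rw [Finset.sum_add_distrib]
    simpa using hαβ
  have hquad : τ ≤ quad G w := by
    rw [S.quad_eq]
    simp_rw [hco, mul_add]
    rw [Finset.sum_add_distrib]
    simp only [mul_ite, mul_one, mul_zero, Finset.sum_ite_eq', Finset.mem_univ, if_true]
    have h1 : τ ≤ S.lam S.i0 := by
      change (1 - δ) * S.rho ≤ S.rho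
      nlinarith
    nlinarith [sq_nonneg α, sq_nonneg β]
  -- pointwise bound
  set D := Fintype.card V / τ ^ 2 with hD
  have hD0 : 0 < D := by positivity
  have hwD : ∀ u, w u ^ 2 ≤ D := by
    intro u
    have h1 : w u ^ 2 ≤ S.b S.i0 u ^ 2 + S.b i1 u ^ 2 := by
      have : S.b S.i0 u ^ 2 + S.b i1 u ^ 2 - w u ^ 2 = (α * S.b i1 u - β * S.b S.i0 u) ^ 2 := by
        rw [hw]; linear_combination -(S.b S.i0 u ^ 2 + S.b i1 u ^ 2) * hαβ
      nlinarith [sq_nonneg (α * S.b i1 u - β * S.b S.i0 u)]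
    have h2 : S.rho ^ 2 * S.b S.i0 u ^ 2 + S.lam i1 ^ 2 * S.b i1 u ^ 2 ≤ Fintype.card V := by
      refine le_trans ?_ (Spec.deg_le (G := G) u)
      rw [S.deg_eq, S.sum_split]
      refine add_le_add le_rfl ?_
      exact Finset.single_le_sum (f := fun i => S.lam i ^ 2 * S.b i u ^ 2) (fun _ _ => by positivity)
        (Finset.mem_erase.2 ⟨hi1, Finset.mem_univ _⟩)
    have h3 : τ ^ 2 ≤ S.rho ^ 2 := pow_le_pow_left₀ hτ0.le (by rw [hτ]; nlinarith) 2
    have h4 : τ ^ 2 ≤ S.lam i1 ^ 2 := pow_le_pow_left₀ hτ0.le hl 2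
    rw [hD, le_div_iff₀ (by positivity)]
    nlinarith [sq_nonneg (S.b S.i0 u), sq_nonneg (S.b i1 u)]
  set M := Real.sqrt D with hM
  have hMD : M ^ 2 = D := Real.sq_sqrt hD0.le
  have hM0 : 0 < M := Real.sqrt_pos.2 hD0
  have hwM : ∀ u, |w u| ≤ M := fun u => Real.abs_le_sqrt (hwD u)
  set p : V → ℝ := fun u => max (w u) 0 with hp
  set q : V → ℝ := fun u => max (-w u) 0 with hq
  have hpq : ∀ u, w u = p u - q u := by
    intro u; simp only [hp, hq]
    rcases le_total 0 (w u) with h | h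
    · rw [max_eq_left h, max_eq_right (by linarith)]; ring
    · rw [max_eq_right h, max_eq_left (by linarith)]; ring
  have hpq' : ∀ u, |w u| = p u + q u := by
    intro u; simp only [hp, hq]
    rcases le_total 0 (w u) with h | h
    · rw [max_eq_left h, max_eq_right (by linarith), abs_of_nonneg h]; ring
    · rw [max_eq_right h, max_eq_left (by linarith), abs_of_nonpos h]; ring
  have hp0 : ∀ u, 0 ≤ p u := fun u => le_max_right _ _
  have hq0 : ∀ u, 0 ≤ q u := fun u => le_max_right _ _
  have hpq0 : ∀ u, p u * q u = 0 := by
    intro u; simp only [hp, hq]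
    rcases le_total 0 (w u) with h | h
    · rw [max_eq_right (by linarith : -w u ≤ 0)]; ring
    · rw [max_eq_right h]; ring
  have habs : 1 ≤ M * ∑ u, |w u| := by
    rw [← hnorm, Finset.mul_sum]
    refine Finset.sum_le_sum fun u _ => ?_
    rw [← sq_abs, sq]
    exact mul_le_mul_of_nonneg_right (hwM u) (abs_nonneg _)
  have hs1 : ∑ u, p u = ∑ u, q u := by
    have : ∑ u, w u = ∑ u, p u - ∑ u, q u := by
      rw [← Finset.sum_sub_distrib]; exact Finset.sum_congr rfl fun u _ => hpq u
    linarith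
  have hs2 : ∑ u, |w u| = ∑ u, p u + ∑ u, q u := by
    rw [← Finset.sum_add_distrib]; exact Finset.sum_congr rfl fun u _ => hpq' u
  have hspos : 0 < ∑ u, |w u| := by
    by_contra h
    nlinarith
  have key : ∀ f : V → ℝ, (∀ u, 0 ≤ f u) → (∀ u, f u ≤ M) → 0 < ∑ u, f u → 1 ≤ 2 * (M * ∑ u, f u) →
      0 < ∑ u, f u ^ 2 ∧ (1 / 2 ≤ D * (Finset.univ.filter fun u => 0 < f u).card) := by
    intro f hf hfM hfs hfs2
    constructor
    · obtain ⟨u, hu, hu0⟩ := Finset.exists_lt_of_sum_lt (s := Finset.univ) (f := fun _ => (0:ℝ)) (g := f) (by simpa using hfs)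
      exact Finset.sum_pos' (fun _ _ => sq_nonneg _) ⟨u, hu, pow_pos hu0 2⟩
    · have h1 : ∑ u, f u ≤ M * (Finset.univ.filter fun u => 0 < f u).card := by
        calc ∑ u, f u ≤ ∑ u, (if 0 < f u then M else 0) := by
              refine Finset.sum_le_sum fun u _ => ?_
              split_ifs with h
              · exact hfM u
              · exact not_lt.1 h
          _ = _ := by rw [← Finset.sum_filter, Finset.sum_const, nsmul_eq_mul]; ring
      rw [← hMD]
      nlinarith
  have hpM : ∀ u, p u ≤ M := fun u => by have := hwM u; rw [hpq' u] at this; linarith [hq0 u]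
  have hqM : ∀ u, q u ≤ M := fun u => by have := hwM u; rw [hpq' u] at this; linarith [hp0 u]
  obtain ⟨hp1, hp2⟩ := key p hp0 hpM (by linarith) (by rw [hs2] at habs; rw [← hs1] at habs; linarith)
  obtain ⟨hq1, hq2⟩ := key q hq0 hqM (by linarith) (by rw [hs2] at habs; rw [hs1] at habs; linarith)
  have hcard : ((Finset.univ.filter fun u => 0 < p u).card : ℝ) + (Finset.univ.filter fun u => 0 < q u).card ≤ Fintype.card V := by
    have hdisj : Disjoint (Finset.univ.filter fun u => 0 < p u) (Finset.univ.filter fun u => 0 < q u) := by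
      rw [Finset.disjoint_left]
      intro u hu hu'
      simp only [Finset.mem_filter, Finset.mem_univ, true_and] at hu hu'
      have := hpq0 u
      have := mul_pos hu hu'
      linarith
    have := Finset.card_union_of_disjoint hdisj
    have h2 := Finset.card_le_univ ((Finset.univ.filter fun u => 0 < p u) ∪ (Finset.univ.filter fun u => 0 < q u))
    rw [this] at h2
    exact_mod_cast h2
  have hsupp : ∀ a b : ℝ, a + b ≤ Fintype.card V → 1 / 2 ≤ D * b → a ≤ 1.8 * τ :=
    fun a b hab hb => supp_arith _ _ _ _ hn0 hτ0 hτ1 hab hb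
  have hquad2 : quad G w ≤ quad G p + quad G q := by
    unfold quad
    rw [← Finset.sum_add_distrib]
    refine Finset.sum_le_sum fun u _ => ?_
    rw [← Finset.sum_add_distrib]
    refine Finset.sum_le_sum fun v _ => ?_
    rw [← mul_add]
    refine mul_le_mul_of_nonneg_left ?_ (adj_nonneg G u v)
    rw [hpq u, hpq v]
    nlinarith [mul_nonneg (hp0 u) (hq0 v), mul_nonneg (hq0 u) (hp0 v)]
  have hnorm2 : ∑ u, p u ^ 2 + ∑ u, q u ^ 2 = 1 := by
    rw [← hnorm, ← Finset.sum_add_distrib]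
    refine Finset.sum_congr rfl fun u _ => ?_
    rw [hpq u]; linear_combination 2 * hpq0 u
  by_cases hc : τ * ∑ u, p u ^ 2 ≤ quad G p
  · exact restrict_spec p τ hp0 hp1 hc hτ0 (hsupp _ _ hcard hq2)
  · refine restrict_spec q τ hq0 hq1 ?_ hτ0 (hsupp _ _ (by linarith) hp2)
    have : τ * (∑ u, p u ^ 2 + ∑ u, q u ^ 2) = τ := by rw [hnorm2, mul_one]
    nlinarith

/-- number of neighbours of `v` in `W` -/
noncomputable def dg {V : Type*} (G : SimpleGraph V) (W : Finset V) (v : V) : ℕ := (W.filter (G.Adj v)).card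

/-- a pair of vertex sets that is dense enough in terms of common neighbours -/
structure Bip {V : Type*} (G : SimpleGraph V) (P Q : Finset V) (K : ℕ) : Prop where
  disj : ∀ x ∈ P, x ∉ Q
  cP : K ≤ P.card
  cQ : K ≤ Q.card
  nP : ∀ u ∈ P, ∀ u' ∈ P, K ≤ (Q.filter fun q => G.Adj u q ∧ G.Adj u' q).card
  nQ : ∀ u ∈ Q, ∀ u' ∈ Q, K ≤ (P.filter fun q => G.Adj u q ∧ G.Adj u' q).card

lemma Bip.swap {V : Type*} {G : SimpleGraph V} {P Q : Finset V} {K : ℕ} (h : Bip G P Q K) : Bip G Q P K :=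
  ⟨fun x hx hx' => h.disj x hx' hx, h.cQ, h.cP, h.nQ, h.nP⟩

lemma exists_avoid {V : Type*} (A F : Finset V) (h : F.card < A.card) : ∃ x ∈ A, x ∉ F := by
  obtain ⟨x, hx⟩ := Finset.exists_mem_notMem_of_card_lt_card h
  exact ⟨x, hx⟩

lemma bip_path {V : Type*} {G : SimpleGraph V} {P Q : Finset V} {K : ℕ} (h : Bip G P Q K) (k : ℕ) :
    ∀ (F : Finset V) (u u' : V), u ∈ P → u' ∈ P → u ≠ u' → u ∉ F → u' ∉ F → F.card + 2 * k + 2 ≤ K →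
      ∃ p : G.Walk u u', p.IsPath ∧ p.length = 2 * k + 2 ∧ ∀ x ∈ p.support, x ∉ F := by
  induction k with
  | zero =>
    intro F u u' hu hu' hne huF huF' hK
    obtain ⟨q, hq, hqF⟩ := exists_avoid (Q.filter fun q => G.Adj u q ∧ G.Adj u' q) F (by have := h.nP u hu u' hu'; omega)
    obtain ⟨hqQ, h1, h2⟩ := Finset.mem_filter.1 hq
    refine ⟨Walk.cons h1 (Walk.cons h2.symm Walk.nil), ?_, by simp, ?_⟩
    · simp [Walk.cons_isPath_iff, hne, h1.ne, h2.ne.symm]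
    · intro x hx
      simp only [Walk.support_cons, Walk.support_nil, List.mem_cons, List.not_mem_nil, or_false] at hx
      rcases hx with rfl | rfl | rfl <;> assumption
  | succ k ih =>
    intro F u u' hu hu' hne huF huF' hK
    obtain ⟨w, hw, hwF⟩ := exists_avoid P (insert u (insert u' F)) (by
      have := h.cP
      have h1 := Finset.card_insert_le u (insert u' F)
      have h2 := Finset.card_insert_le u' F
      omega)
    simp only [Finset.mem_insert, not_or] at hwF
    obtain ⟨hwu, hwu', hwF⟩ := hwF
    obtain ⟨q, hq, hqF⟩ := exists_avoid (Q.filter fun q => G.Adj u q ∧ G.Adj w q) F (by have := h.nP u hu w hw; omega)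
    obtain ⟨hqQ, h1, h2⟩ := Finset.mem_filter.1 hq
    have hqu' : u' ≠ q := fun e => h.disj u' hu' (e ▸ hqQ)
    obtain ⟨p, hp, hlen, hsup⟩ := ih (insert u (insert q F)) w u' hw hu' hwu'
      (by simp [hwu, h2.ne, hwF]) (by simp [hne.symm, hqu', huF']) (by
      have h1 := Finset.card_insert_le u (insert q F)
      have h2 := Finset.card_insert_le q F
      omega)
    have hup : u ∉ p.support := fun hh => hsup u hh (by simp)
    have hqp : q ∉ p.support := fun hh => hsup q hh (by simp)
    refine ⟨Walk.cons h1 (Walk.cons h2.symm p), ?_, by simp [hlen]; omega, ?_⟩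
    · simp only [Walk.cons_isPath_iff, Walk.support_cons, List.mem_cons, not_or]
      exact ⟨⟨hp, hqp⟩, h1.ne, hup⟩
    · intro x hx
      simp only [Walk.support_cons, List.mem_cons] at hx
      rcases hx with rfl | rfl | hx
      · assumption
      · assumption
      · intro hxF
        exact hsup x hx (by simp [hxF])

lemma bip_even {V : Type*} {G : SimpleGraph V} {P Q : Finset V} {k : ℕ} (h : Bip G P Q (2 * k + 4)) :
    HasCyc G (2 * k + 4) := by
  obtain ⟨u, hu, -⟩ := exists_avoid P ∅ (by have := h.cP; rw [Finset.card_empty]; omega)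
  obtain ⟨u', hu', hne⟩ := exists_avoid P {u} (by have := h.cP; simp; omega)
  obtain ⟨q, hq, -⟩ := exists_avoid (Q.filter fun q => G.Adj u q ∧ G.Adj u' q) ∅ (by
    have := h.nP u hu u' hu'; rw [Finset.card_empty]; omega)
  obtain ⟨hqQ, h1, h2⟩ := Finset.mem_filter.1 hq
  obtain ⟨p, hp, hlen, hsup⟩ := bip_path h k {q} u u' hu hu' (by simpa [eq_comm] using hne) (by simp [h1.ne])
    (by simp [h2.ne]) (by simp; omega)
  have := HasCyc.of_path (Walk.cons h1.symm p) (by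
    rw [Walk.cons_isPath_iff]
    exact ⟨hp, fun hh => hsup q hh (by simp)⟩) (by simp; omega) h2
  convert this using 1
  simp [hlen]

/-- an intersection in `W` -/
lemma exists_common {V : Type*} (W A B : Finset V) (hA : A ⊆ W) (hB : B ⊆ W) (h : W.card < A.card + B.card) :
    ∃ x, x ∈ A ∧ x ∈ B := by
  by_contra hcon
  have hd : Disjoint A B := Finset.disjoint_left.2 fun x hx hx' => hcon ⟨x, hx, hx'⟩
  have h1 := Finset.card_union_of_disjoint hd
  have h2 := Finset.card_le_card (Finset.union_subset hA hB)
  omega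

lemma triangle {V : Type*} {G : SimpleGraph V} {a b c : V} (h1 : G.Adj a b) (h2 : G.Adj b c) (h3 : G.Adj c a) :
    HasCyc G 3 := by
  have := HasCyc.of_path (Walk.cons h1 (Walk.cons h2 Walk.nil)) (by
    simp [Walk.cons_isPath_iff, h1.ne, h2.ne, h3.ne.symm]) (by simp) h3
  simpa using this

lemma claim1 {V : Type*} {G : SimpleGraph V} {P Q : Finset V} {k : ℕ} (h : Bip G P Q (2 * k + 3))
    {s s' : V} (hs : G.Adj s s') (hd : Q.card < dg G Q s + dg G Q s') (h1 : 3 ≤ dg G Q s) (h2 : 3 ≤ dg G Q s') :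
    HasCyc G (2 * k + 3) := by
  rcases k with _ | k
  · obtain ⟨q, hq, hq'⟩ := exists_common Q (Q.filter (G.Adj s)) (Q.filter (G.Adj s')) (Finset.filter_subset _ _)
      (Finset.filter_subset _ _) hd
    exact triangle hs (Finset.mem_filter.1 hq').2 (Finset.mem_filter.1 hq).2.symm
  · obtain ⟨q, hq, hqF⟩ := exists_avoid (Q.filter (G.Adj s)) {s'} (by unfold dg at h1; simp; omega)
    obtain ⟨q', hq', hqF'⟩ := exists_avoid (Q.filter (G.Adj s')) {s, q} (by
      unfold dg at h2; have := Finset.card_insert_le s {q}; rw [Finset.card_singleton] at this; omega)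
    obtain ⟨hqQ, hsq⟩ := Finset.mem_filter.1 hq
    obtain ⟨hqQ', hsq'⟩ := Finset.mem_filter.1 hq'
    simp only [Finset.mem_insert, Finset.mem_singleton, not_or] at hqF hqF'
    obtain ⟨p, hp, hlen, hsup⟩ := bip_path h.swap k {s, s'} q' q hqQ' hqQ hqF'.2
      (by simp [hqF'.1, hsq'.ne.symm]) (by simp [hqF, hsq.ne.symm]) (by
        have := Finset.card_insert_le s {s'}; rw [Finset.card_singleton] at this; omega)
    have hsp : s ∉ p.support := fun hh => hsup s hh (by simp)
    have hsp' : s' ∉ p.support := fun hh => hsup s' hh (by simp)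
    have := HasCyc.of_path (Walk.cons hs (Walk.cons hsq' p)) (by
      simp only [Walk.cons_isPath_iff, Walk.support_cons, List.mem_cons, not_or]
      exact ⟨⟨hp, hsp'⟩, hs.ne, hsp⟩) (by simp) hsq.symm
    convert this using 1
    simp [hlen]; omega

lemma claim2 {V : Type*} {G : SimpleGraph V} {P Q : Finset V} {k : ℕ} (h : Bip G P Q (2 * k + 3))
    {s : V} (hd : ∀ p ∈ P, Q.card < dg G Q p + dg G Q s) (h1 : 2 ≤ dg G P s) (h2 : 1 ≤ dg G Q s) :
    HasCyc G (2 * k + 3) := by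
  rcases k with _ | k
  · obtain ⟨p, hp, -⟩ := exists_avoid (P.filter (G.Adj s)) ∅ (by unfold dg at h1; rw [Finset.card_empty]; omega)
    obtain ⟨hpP, hsp⟩ := Finset.mem_filter.1 hp
    obtain ⟨q, hq, hq'⟩ := exists_common Q (Q.filter (G.Adj p)) (Q.filter (G.Adj s)) (Finset.filter_subset _ _)
      (Finset.filter_subset _ _) (hd p hpP)
    exact triangle hsp (Finset.mem_filter.1 hq).2 (Finset.mem_filter.1 hq').2.symm
  · obtain ⟨q, hq, -⟩ := exists_avoid (Q.filter (G.Adj s)) ∅ (by unfold dg at h2; rw [Finset.card_empty]; omega)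
    obtain ⟨hqQ, hsq⟩ := Finset.mem_filter.1 hq
    obtain ⟨p, hp, hpF⟩ := exists_avoid (P.filter fun x => G.Adj q x ∧ G.Adj q x) {s} (by
      have := h.nQ q hqQ q hqQ; rw [Finset.card_singleton]; omega)
    obtain ⟨hpP, hqp, -⟩ := Finset.mem_filter.1 hp
    obtain ⟨p', hp', hpF'⟩ := exists_avoid (P.filter (G.Adj s)) {p} (by
      unfold dg at h1; rw [Finset.card_singleton]; omega)
    obtain ⟨hpP', hsp'⟩ := Finset.mem_filter.1 hp'
    simp only [Finset.mem_singleton] at hpF hpF'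
    have hqp' : p' ≠ q := fun e => h.disj p' hpP' (e ▸ hqQ)
    obtain ⟨w, hw, hlen, hsup⟩ := bip_path h k {s, q} p p' hpP hpP' (Ne.symm hpF')
      (by simp [hpF, hqp.ne.symm]) (by simp [hqp', hsp'.ne.symm]) (by
        have := Finset.card_insert_le s {q}; rw [Finset.card_singleton] at this; omega)
    have hsw : s ∉ w.support := fun hh => hsup s hh (by simp)
    have hqw : q ∉ w.support := fun hh => hsup q hh (by simp)
    have := HasCyc.of_path (Walk.cons hsq (Walk.cons hqp w)) (by
      simp only [Walk.cons_isPath_iff, Walk.support_cons, List.mem_cons, not_or]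
      exact ⟨⟨hw, hqw⟩, hsq.ne, hsw⟩) (by simp) hsp'.symm
    convert this using 1
    simp [hlen]; omega

lemma dg_cast {V : Type*} (G : SimpleGraph V) (W : Finset V) (u : V) :
    (dg G W u : ℝ) = ∑ v ∈ W, adj G u v := by
  unfold dg adj
  rw [Finset.sum_boole]

lemma dg_le {V : Type*} (G : SimpleGraph V) (W : Finset V) (u : V) : dg G W u ≤ W.card :=
  Finset.card_filter_le _ _

/-- a very negative eigenvalue gives a large cut -/
lemma cross_cut {V : Type*} [Fintype V] {G : SimpleGraph V} (S : Spec G) (i : V) (hneg : S.lam i ≤ 0) :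
    ∃ A : Finset V, S.lam i ^ 2 ≤ ∑ u ∈ A, ∑ v ∈ Aᶜ, adj G u v := by
  set y := S.b i with hy
  set A : Finset V := Finset.univ.filter fun u => 0 ≤ y u with hA
  refine ⟨A, ?_⟩
  have hmA : ∀ u ∈ A, 0 ≤ y u := fun u hu => by simpa [hA] using hu
  have hmB : ∀ u ∈ Aᶜ, y u ≤ 0 := fun u hu => by
    have : ¬ 0 ≤ y u := by simpa [hA] using hu
    linarith
  have hsplit : ∀ f : V → ℝ, ∑ u, f u = ∑ u ∈ A, f u + ∑ u ∈ Aᶜ, f u :=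
    fun f => (Finset.sum_add_sum_compl A f).symm
  set g : V → V → ℝ := fun u v => adj G u v * (y u * y v) with hg
  have hq : S.lam i = ∑ u, ∑ v, g u v := (S.quad_b i).symm
  have hq2 : ∑ u, ∑ v, g u v = (∑ u ∈ A, ∑ v ∈ A, g u v + ∑ u ∈ A, ∑ v ∈ Aᶜ, g u v) +
      (∑ u ∈ Aᶜ, ∑ v ∈ A, g u v + ∑ u ∈ Aᶜ, ∑ v ∈ Aᶜ, g u v) := by
    rw [hsplit, ← Finset.sum_add_distrib, ← Finset.sum_add_distrib]
    congr 1 <;> exact Finset.sum_congr rfl fun u _ => hsplit _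
  have hAA : 0 ≤ ∑ u ∈ A, ∑ v ∈ A, g u v := Finset.sum_nonneg fun u hu => Finset.sum_nonneg fun v hv =>
    mul_nonneg (adj_nonneg G u v) (mul_nonneg (hmA u hu) (hmA v hv))
  have hBB : 0 ≤ ∑ u ∈ Aᶜ, ∑ v ∈ Aᶜ, g u v := Finset.sum_nonneg fun u hu => Finset.sum_nonneg fun v hv =>
    mul_nonneg (adj_nonneg G u v) (mul_nonneg_of_nonpos_of_nonpos (hmB u hu) (hmB v hv))
  have hBA : ∑ u ∈ Aᶜ, ∑ v ∈ A, g u v = ∑ u ∈ A, ∑ v ∈ Aᶜ, g u v := by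
    rw [Finset.sum_comm]
    refine Finset.sum_congr rfl fun u _ => Finset.sum_congr rfl fun v _ => ?_
    simp only [hg]
    rw [_root_.adj_comm G]; ring
  set E := ∑ u ∈ A, ∑ v ∈ Aᶜ, g u v with hE
  have h1 : -(S.lam i) ≤ 2 * (-E) := by linarith
  have hcs := Finset.sum_mul_sq_le_sq_mul_sq (A ×ˢ Aᶜ) (fun p => adj G p.1 p.2) (fun p => y p.1 * y p.2)
  have hx1 : ∑ p ∈ A ×ˢ Aᶜ, adj G p.1 p.2 * (y p.1 * y p.2) = E := by rw [Finset.sum_product]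
  have hx2 : ∑ p ∈ A ×ˢ Aᶜ, adj G p.1 p.2 ^ 2 = ∑ u ∈ A, ∑ v ∈ Aᶜ, adj G u v := by
    simp_rw [adj_sq]; rw [Finset.sum_product]
  have hx3 : ∑ p ∈ A ×ˢ Aᶜ, (y p.1 * y p.2) ^ 2 = (∑ u ∈ A, y u ^ 2) * ∑ v ∈ Aᶜ, y v ^ 2 := by
    simp_rw [mul_pow]
    rw [Finset.sum_product, Finset.sum_mul_sum]
  rw [hx1, hx2, hx3] at hcs
  have hn := S.norm_b i
  rw [hsplit] at hn
  have h2 : (∑ u ∈ A, y u ^ 2) * ∑ v ∈ Aᶜ, y v ^ 2 ≤ 1 / 4 := by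
    nlinarith [sq_nonneg (∑ u ∈ A, y u ^ 2 - ∑ v ∈ Aᶜ, y v ^ 2)]
  have h3 : 0 ≤ ∑ u ∈ A, ∑ v ∈ Aᶜ, adj G u v :=
    Finset.sum_nonneg fun u _ => Finset.sum_nonneg fun v _ => adj_nonneg G u v
  have h4 : E ^ 2 ≤ (∑ u ∈ A, ∑ v ∈ Aᶜ, adj G u v) * (1 / 4) := hcs.trans (mul_le_mul_of_nonneg_left h2 h3)
  have h5 : (-(S.lam i)) ^ 2 ≤ (2 * (-E)) ^ 2 := pow_le_pow_left₀ (by linarith) h1 2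
  nlinarith

/-- few vertices have many missing neighbours -/
lemma half_dense {V : Type*} (G : SimpleGraph V) (A B : Finset V) (n : ℝ) (hn : 0 < n)
    (h : (A.card : ℝ) * B.card - 0.000002 * n ^ 2 ≤ ∑ u ∈ A, ∑ v ∈ B, adj G u v) :
    ∃ P ⊆ A, (A.card : ℝ) - 0.001 * n ≤ P.card ∧ ∀ u ∈ P, (B.card : ℝ) - dg G B u ≤ 0.002 * n := by
  refine ⟨A.filter fun u => (B.card : ℝ) - dg G B u ≤ 0.002 * n, Finset.filter_subset _ _, ?_, fun u hu => (Finset.mem_filter.1 hu).2⟩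
  have hsplit := Finset.card_filter_add_card_filter_not (s := A) (fun u => (B.card : ℝ) - dg G B u ≤ 0.002 * n)
  set P := A.filter fun u => (B.card : ℝ) - dg G B u ≤ 0.002 * n
  set R := A.filter fun u => ¬ ((B.card : ℝ) - dg G B u ≤ 0.002 * n) with hR
  have hsp : (P.card : ℝ) + R.card = A.card := by exact_mod_cast hsplit
  have h1 : ∑ u ∈ A, ((B.card : ℝ) - dg G B u) ≤ 0.000002 * n ^ 2 := by
    rw [Finset.sum_sub_distrib, Finset.sum_const, nsmul_eq_mul]
    simp_rw [dg_cast]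
    linarith
  have h2 : ∑ u ∈ R, (0.002 * n) ≤ ∑ u ∈ A, ((B.card : ℝ) - dg G B u) := by
    refine (Finset.sum_le_sum fun u hu => ?_).trans (Finset.sum_le_sum_of_subset_of_nonneg (Finset.filter_subset _ _) ?_)
    · exact (not_le.1 (Finset.mem_filter.1 hu).2).le
    · intro u _ _
      have : (dg G B u : ℝ) ≤ B.card := by exact_mod_cast dg_le G B u
      linarith
  rw [Finset.sum_const, nsmul_eq_mul] at h2
  have h3 : n * (R.card * 0.002) ≤ n * (0.000002 * n) := by nlinarith
  have h4 := le_of_mul_le_mul_left h3 hn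
  norm_num at *
  linarith

lemma dg_sub {V : Type*} (G : SimpleGraph V) {Q B : Finset V} (h : Q ⊆ B) (u : V) :
    (Q.card : ℝ) - dg G Q u ≤ B.card - dg G B u := by
  have h1 := Finset.card_filter_add_card_filter_not (s := Q) (G.Adj u)
  have h2 := Finset.card_filter_add_card_filter_not (s := B) (G.Adj u)
  have h3 : (Q.filter fun v => ¬ G.Adj u v).card ≤ (B.filter fun v => ¬ G.Adj u v).card :=
    Finset.card_le_card (Finset.filter_subset_filter _ h)
  unfold dg
  have h1' : ((Q.filter (G.Adj u)).card : ℝ) + (Q.filter fun v => ¬ G.Adj u v).card = Q.card := by exact_mod_cast h1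
  have h2' : ((B.filter (G.Adj u)).card : ℝ) + (B.filter fun v => ¬ G.Adj u v).card = B.card := by exact_mod_cast h2
  have h3' : ((Q.filter fun v => ¬ G.Adj u v).card : ℝ) ≤ (B.filter fun v => ¬ G.Adj u v).card := by exact_mod_cast h3
  linarith

lemma dense_pair {V : Type*} [Fintype V] (G : SimpleGraph V) (A : Finset V) (hn : 0 < (Fintype.card V : ℝ))
    (h : (1 / 4 - 0.000002) * (Fintype.card V : ℝ) ^ 2 ≤ ∑ u ∈ A, ∑ v ∈ Aᶜ, adj G u v) :
    ∃ P Q : Finset V, (∀ x ∈ P, x ∉ Q) ∧ 0.497 * (Fintype.card V : ℝ) ≤ P.card ∧ 0.497 * (Fintype.card V : ℝ) ≤ Q.card ∧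
      P.card ≤ 0.502 * (Fintype.card V : ℝ) ∧ Q.card ≤ 0.502 * (Fintype.card V : ℝ) ∧
      (Fintype.card V : ℝ) - 0.002 * Fintype.card V ≤ P.card + Q.card ∧
      (∀ u ∈ P, (Q.card : ℝ) - dg G Q u ≤ 0.002 * Fintype.card V) ∧
      (∀ u ∈ Q, (P.card : ℝ) - dg G P u ≤ 0.002 * Fintype.card V) := by
  set n : ℝ := (Fintype.card V : ℝ) with hnn
  have hab : (A.card : ℝ) + Aᶜ.card = n := by
    rw [hnn]; exact_mod_cast Finset.card_add_card_compl A
  have hX : ∑ u ∈ A, ∑ v ∈ Aᶜ, adj G u v ≤ (A.card : ℝ) * Aᶜ.card := by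
    calc _ ≤ ∑ u ∈ A, ∑ v ∈ Aᶜ, (1:ℝ) := Finset.sum_le_sum fun u _ => Finset.sum_le_sum fun v _ => adj_le_one G u v
      _ = _ := by simp
  have hX' : ∑ u ∈ Aᶜ, ∑ v ∈ A, adj G u v = ∑ u ∈ A, ∑ v ∈ Aᶜ, adj G u v := by
    rw [Finset.sum_comm]
    exact Finset.sum_congr rfl fun u _ => Finset.sum_congr rfl fun v _ => _root_.adj_comm G _ _
  have hprod : (A.card : ℝ) * Aᶜ.card ≤ 1 / 4 * n ^ 2 := by
    rw [← hab]; nlinarith [sq_nonneg ((A.card : ℝ) - Aᶜ.card)]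
  have hdiff : ((A.card : ℝ) - Aᶜ.card) ^ 2 ≤ (0.004 * n) ^ 2 := by
    have : ((A.card : ℝ) - Aᶜ.card) ^ 2 = n ^ 2 - 4 * (A.card * Aᶜ.card) := by rw [← hab]; ring
    rw [this]
    have : 0 ≤ n ^ 2 := sq_nonneg n
    norm_num at *
    nlinarith
  have hd := abs_le.1 (abs_le_of_sq_le_sq hdiff (by positivity))
  obtain ⟨P, hPA, hPc, hP⟩ := half_dense G A Aᶜ n hn (by
    have : (1 / 4 - 0.000002) * n ^ 2 = 1 / 4 * n ^ 2 - 0.000002 * n ^ 2 := by ring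
    linarith)
  obtain ⟨Q, hQA, hQc, hQ⟩ := half_dense G Aᶜ A n hn (by
    have : (1 / 4 - 0.000002) * n ^ 2 = 1 / 4 * n ^ 2 - 0.000002 * n ^ 2 := by ring
    rw [hX']
    linarith)
  have hP2 : (P.card : ℝ) ≤ A.card := by exact_mod_cast Finset.card_le_card hPA
  have hQ2 : (Q.card : ℝ) ≤ Aᶜ.card := by exact_mod_cast Finset.card_le_card hQA
  refine ⟨P, Q, fun x hx hx' => (Finset.mem_compl.1 (hQA hx')) (hPA hx), ?_, ?_, ?_, ?_, ?_, ?_, ?_⟩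
  · linarith [hd.1, hd.2]
  · linarith [hd.1, hd.2]
  · linarith [hd.1, hd.2]
  · linarith [hd.1, hd.2]
  · linarith
  · intro u hu
    exact (dg_sub G hQA u).trans (hP u hu)
  · intro u hu
    exact (dg_sub G hPA u).trans (hQ u hu)

lemma common_ge {V : Type*} (G : SimpleGraph V) (Q : Finset V) (u u' : V) :
    (dg G Q u : ℝ) + dg G Q u' - Q.card ≤ (Q.filter fun q => G.Adj u q ∧ G.Adj u' q).card := by
  have h1 := Finset.card_union_add_card_inter (Q.filter (G.Adj u)) (Q.filter (G.Adj u'))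
  have h2 : (Q.filter (G.Adj u)) ∩ (Q.filter (G.Adj u')) = Q.filter fun q => G.Adj u q ∧ G.Adj u' q := by
    ext x; simp only [Finset.mem_inter, Finset.mem_filter]; tauto
  have h3 : ((Q.filter (G.Adj u)) ∪ (Q.filter (G.Adj u'))).card ≤ Q.card :=
    Finset.card_le_card (Finset.union_subset (Finset.filter_subset _ _) (Finset.filter_subset _ _))
  rw [h2] at h1
  have : dg G Q u + dg G Q u' ≤ Q.card + (Q.filter fun q => G.Adj u q ∧ G.Adj u' q).card := by
    unfold dg; omega
  have : (dg G Q u : ℝ) + dg G Q u' ≤ Q.card + (Q.filter fun q => G.Adj u q ∧ G.Adj u' q).card := by exact_mod_cast this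
  linarith

lemma odd_structure {V : Type*} [Fintype V] (G : SimpleGraph V) (P Q : Finset V) (n : ℝ)
    (hnV : n = Fintype.card V) (hn : 1000 ≤ n)
    (hdisj : ∀ x ∈ P, x ∉ Q) (hP1 : 0.497 * n ≤ P.card) (hQ1 : 0.497 * n ≤ Q.card)
    (hP2 : P.card ≤ 0.502 * n) (hQ2 : Q.card ≤ 0.502 * n) (hPQ : n - 0.002 * n ≤ P.card + Q.card)
    (hP : ∀ u ∈ P, (Q.card : ℝ) - dg G Q u ≤ 0.002 * n)
    (hQ : ∀ u ∈ Q, (P.card : ℝ) - dg G P u ≤ 0.002 * n)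
    (k : ℕ) (hbip : Bip G P Q (2 * k + 3)) (hno : ¬ HasCyc G (2 * k + 3)) :
    ∃ L X : Finset V, (∀ u ∈ X, u ∉ L) ∧
      (∀ u ∈ X, ∀ v ∈ X, ¬ G.Adj u v) ∧ (∀ u, u ∉ L → u ∉ X → ∀ v, v ∉ L → v ∉ X → ¬ G.Adj u v) ∧
      (∀ u ∈ L, (dg G Finset.univ u : ℝ) ≤ 0.26 * n) ∧ (L.card : ℝ) ≤ 0.002 * n := by
  have hd : Disjoint P Q := Finset.disjoint_left.2 fun x hx => hdisj x hx
  have hbad : ((P ∪ Q)ᶜ.card : ℝ) ≤ 0.002 * n := by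
    have h1 := Finset.card_add_card_compl (P ∪ Q)
    rw [Finset.card_union_of_disjoint hd] at h1
    have : (P.card : ℝ) + Q.card + (P ∪ Q)ᶜ.card = n := by rw [hnV]; exact_mod_cast h1
    linarith
  have htot : ∀ u, (dg G Finset.univ u : ℝ) ≤ dg G P u + dg G Q u + 0.002 * n := by
    intro u
    have h1 : dg G (P ∪ Q)ᶜ u ≤ (P ∪ Q)ᶜ.card := dg_le _ _ _
    have h2 : (dg G Finset.univ u : ℝ) = dg G P u + dg G Q u + dg G (P ∪ Q)ᶜ u := by
      rw [dg_cast, dg_cast, dg_cast, dg_cast, ← Finset.sum_add_sum_compl (P ∪ Q), Finset.sum_union hd]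
    have h3 : (dg G (P ∪ Q)ᶜ u : ℝ) ≤ (P ∪ Q)ᶜ.card := by exact_mod_cast h1
    linarith
  have hsub : ∀ (W : Finset V) u, dg G W u ≤ dg G Finset.univ u := by
    intro W u
    exact Finset.card_le_card (Finset.filter_subset_filter _ (Finset.subset_univ _))
  have hsmall : ∀ u, (dg G P u : ℝ) < 0.003 * n ∨ (dg G Q u : ℝ) < 0.003 * n := by
    intro u
    by_contra hcon
    rw [not_or, not_lt, not_lt] at hcon
    refine hno (claim2 hbip (s := u) ?_ ?_ ?_)
    · intro p hp
      have := hP p hp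
      have : (Q.card : ℝ) < dg G Q p + dg G Q u := by linarith [hcon.2]
      exact_mod_cast this
    · have : (2 : ℝ) ≤ dg G P u := by linarith [hcon.1]
      exact_mod_cast this
    · have : (1 : ℝ) ≤ dg G Q u := by linarith [hcon.2]
      exact_mod_cast this
  have hindQ : ∀ u v, 0.255 * n ≤ dg G Q u → 0.255 * n ≤ dg G Q v → ¬ G.Adj u v := by
    intro u v hu hv hadj
    refine hno (claim1 hbip hadj ?_ ?_ ?_)
    · have : (Q.card : ℝ) < dg G Q u + dg G Q v := by linarith
      exact_mod_cast this
    · have : (3 : ℝ) ≤ dg G Q u := by linarith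
      exact_mod_cast this
    · have : (3 : ℝ) ≤ dg G Q v := by linarith
      exact_mod_cast this
  have hindP : ∀ u v, 0.255 * n ≤ dg G P u → 0.255 * n ≤ dg G P v → ¬ G.Adj u v := by
    intro u v hu hv hadj
    refine hno (claim1 hbip.swap hadj ?_ ?_ ?_)
    · have : (P.card : ℝ) < dg G P u + dg G P v := by linarith
      exact_mod_cast this
    · have : (3 : ℝ) ≤ dg G P u := by linarith
      exact_mod_cast this
    · have : (3 : ℝ) ≤ dg G P v := by linarith
      exact_mod_cast this
  set L : Finset V := Finset.univ.filter fun u => (dg G Finset.univ u : ℝ) ≤ 0.26 * n with hL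
  set X : Finset V := Finset.univ.filter fun u => u ∉ L ∧ 0.255 * n ≤ (dg G Q u : ℝ) with hX
  have hmL : ∀ u, u ∈ L ↔ (dg G Finset.univ u : ℝ) ≤ 0.26 * n := fun u => by simp [hL]
  have hmX : ∀ u, u ∈ X ↔ u ∉ L ∧ 0.255 * n ≤ (dg G Q u : ℝ) := fun u => by simp [hX]
  have hY : ∀ u, u ∉ L → u ∉ X → 0.255 * n ≤ (dg G P u : ℝ) := by
    intro u huL huX
    rw [hmX, not_and, not_le] at huX
    have h1 := huX huL
    rw [hmL, not_le] at huL
    have := htot u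
    rcases hsmall u with h | h <;> linarith
  refine ⟨L, X, fun u hu => ((hmX u).1 hu).1, ?_, ?_, fun u hu => (hmL u).1 hu, ?_⟩
  · intro u hu v hv
    exact hindQ u v ((hmX u).1 hu).2 ((hmX v).1 hv).2
  · intro u hu hu' v hv hv'
    exact hindP u v (hY u hu hu') (hY v hv hv')
  · refine le_trans ?_ hbad
    have : L ⊆ (P ∪ Q)ᶜ := by
      intro u hu
      rw [hmL] at hu
      rw [Finset.mem_compl, Finset.mem_union, not_or]
      constructor
      · intro h
        have h1 := hP u h
        have h2 : (dg G Q u : ℝ) ≤ dg G Finset.univ u := by exact_mod_cast hsub Q u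
        linarith
      · intro h
        have h1 := hQ u h
        have h2 : (dg G P u : ℝ) ≤ dg G Finset.univ u := by exact_mod_cast hsub P u
        linarith
    exact_mod_cast Finset.card_le_card this

lemma trace3 {V : Type*} [Fintype V] (G : SimpleGraph V) :
    ∑ u, ((G.adjMatrix ℝ) ^ 3) u u = ∑ u, ∑ v, ∑ w, adj G u v * adj G v w * adj G w u := by
  refine Finset.sum_congr rfl fun u _ => ?_
  have : (G.adjMatrix ℝ) ^ 3 = G.adjMatrix ℝ * (G.adjMatrix ℝ * G.adjMatrix ℝ) := by
    rw [pow_succ, sq, mul_assoc]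
  rw [this, Matrix.mul_apply]
  refine Finset.sum_congr rfl fun v _ => ?_
  rw [Matrix.mul_apply, Finset.mul_sum]
  refine Finset.sum_congr rfl fun w _ => ?_
  simp only [adjMatrix_apply, adj]
  ring

lemma trace3_le {V : Type*} [Fintype V] (G : SimpleGraph V) (L : Finset V) (D : ℝ)
    (hL : ∀ u v w, G.Adj u v → G.Adj v w → G.Adj w u → u ∈ L ∨ v ∈ L ∨ w ∈ L)
    (hD : ∀ u ∈ L, (dg G Finset.univ u : ℝ) ≤ D) :
    ∑ u, ((G.adjMatrix ℝ) ^ 3) u u ≤ 3 * (L.card * D ^ 2) := by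
  rw [trace3]
  set c : V → ℝ := fun u => if u ∈ L then 1 else 0 with hc
  have hc0 : ∀ u, 0 ≤ c u := fun u => by simp only [hc]; split_ifs <;> norm_num
  set g : V → V → V → ℝ := fun u v w => adj G u v * adj G v w * adj G w u with hg
  have hg0 : ∀ u v w, 0 ≤ g u v w := fun u v w =>
    mul_nonneg (mul_nonneg (adj_nonneg _ _ _) (adj_nonneg _ _ _)) (adj_nonneg _ _ _)
  have h1 : ∀ u v w, g u v w ≤ c u * g u v w + c v * g u v w + c w * g u v w := by
    intro u v w
    by_cases h : G.Adj u v ∧ G.Adj v w ∧ G.Adj w u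
    · have := hL u v w h.1 h.2.1 h.2.2
      have h2 : 1 ≤ c u + c v + c w := by
        rcases this with h | h | h
        · have : c u = 1 := by simp [hc, h]
          linarith [hc0 v, hc0 w]
        · have : c v = 1 := by simp [hc, h]
          linarith [hc0 u, hc0 w]
        · have : c w = 1 := by simp [hc, h]
          linarith [hc0 v, hc0 u]
      nlinarith [hg0 u v w]
    · have : g u v w = 0 := by
        simp only [hg, adj]
        by_cases h1 : G.Adj u v
        · by_cases h2 : G.Adj v w
          · have h3 : ¬ G.Adj w u := fun h3 => h ⟨h1, h2, h3⟩
            simp [h3]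
          · simp [h2]
        · simp [h1]
      rw [this]; simp
  have hkey : ∑ u, ∑ v, ∑ w, c u * g u v w ≤ L.card * D ^ 2 := by
    have h2 : ∀ u, ∑ v, ∑ w, c u * g u v w ≤ if u ∈ L then D ^ 2 else 0 := by
      intro u
      split_ifs with hu
      · have h3 : ∑ v, ∑ w, c u * g u v w ≤ ∑ v, ∑ w, adj G u v * adj G u w := by
          refine Finset.sum_le_sum fun v _ => Finset.sum_le_sum fun w _ => ?_
          have : c u = 1 := by simp [hc, hu]
          rw [this, one_mul]
          simp only [hg]
          rw [_root_.adj_comm G w u]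
          refine mul_le_mul_of_nonneg_right ?_ (adj_nonneg _ _ _)
          exact mul_le_of_le_one_right (adj_nonneg _ _ _) (adj_le_one _ _ _)
        refine h3.trans ?_
        rw [← Finset.sum_mul_sum, ← dg_cast, ← sq]
        exact pow_le_pow_left₀ (Nat.cast_nonneg _) (hD u hu) 2
      · have : c u = 0 := by simp [hc, hu]
        simp [this]
    refine (Finset.sum_le_sum fun u _ => h2 u).trans ?_
    rw [← Finset.sum_filter, Finset.sum_const, nsmul_eq_mul]
    simp
  have hrot : ∀ u v w, g u v w = g v w u := fun u v w => by simp only [hg]; ring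
  have hkey2 : ∑ u, ∑ v, ∑ w, c v * g u v w ≤ L.card * D ^ 2 := by
    refine le_trans (le_of_eq ?_) hkey
    rw [Finset.sum_comm]
    refine Finset.sum_congr rfl fun v _ => ?_
    rw [Finset.sum_comm]
    exact Finset.sum_congr rfl fun w _ => Finset.sum_congr rfl fun u _ => by rw [hrot u v w]
  have hkey3 : ∑ u, ∑ v, ∑ w, c w * g u v w ≤ L.card * D ^ 2 := by
    refine le_trans (le_of_eq ?_) hkey2
    rw [Finset.sum_comm]
    have : ∀ v, ∑ u, ∑ w, c w * g u v w = ∑ w, ∑ u, c w * g v w u := by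
      intro v
      rw [Finset.sum_comm]
      exact Finset.sum_congr rfl fun w _ => Finset.sum_congr rfl fun u _ => by rw [hrot u v w]
    exact Finset.sum_congr rfl fun v _ => this v
  have h4 : ∑ u, ∑ v, ∑ w, g u v w ≤ ∑ u, ∑ v, ∑ w, (c u * g u v w + c v * g u v w + c w * g u v w) :=
    Finset.sum_le_sum fun u _ => Finset.sum_le_sum fun v _ => Finset.sum_le_sum fun w _ => h1 u v w
  simp_rw [Finset.sum_add_distrib] at h4
  linarith

lemma sum_adj_le_of_struct {V : Type*} [Fintype V] (G : SimpleGraph V) (L X : Finset V) (D : ℝ)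
    (hXL : ∀ u ∈ X, u ∉ L) (hX : ∀ u ∈ X, ∀ v ∈ X, ¬ G.Adj u v)
    (hY : ∀ u, u ∉ L → u ∉ X → ∀ v, v ∉ L → v ∉ X → ¬ G.Adj u v)
    (hD : ∀ u ∈ L, (dg G Finset.univ u : ℝ) ≤ D) :
    ∑ u, ∑ v, adj G u v ≤ 2 * ((X.card : ℝ) * (L ∪ X)ᶜ.card) + 2 * (L.card * D) := by
  set Y := (L ∪ X)ᶜ with hYdef
  have hmY : ∀ u, u ∈ Y ↔ u ∉ L ∧ u ∉ X := fun u => by simp [hYdef]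
  set i : Finset V → V → ℝ := fun A u => if u ∈ A then 1 else 0 with hi
  have hi0 : ∀ A u, 0 ≤ i A u := fun A u => by simp only [hi]; split_ifs <;> norm_num
  have hsum : ∀ A : Finset V, ∑ u, i A u = A.card := fun A => by simp [hi]
  have hpt : ∀ u v, adj G u v ≤ i X u * i Y v + i Y u * i X v + (i L u * adj G u v + i L v * adj G v u) := by
    intro u v
    have e1 := mul_nonneg (hi0 X u) (hi0 Y v)
    have e2 := mul_nonneg (hi0 Y u) (hi0 X v)
    have e3 := mul_nonneg (hi0 L u) (adj_nonneg G u v)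
    have e4 := mul_nonneg (hi0 L v) (adj_nonneg G v u)
    by_cases ha : G.Adj u v
    · have h1 : adj G u v = 1 := by simp [adj, ha]
      have h1' : adj G v u = 1 := by simp [adj, ha.symm]
      rw [h1] at e3 ⊢
      rw [h1'] at e4 ⊢
      by_cases huL : u ∈ L
      · have : i L u = 1 := by simp [hi, huL]
        rw [this]; linarith
      by_cases hvL : v ∈ L
      · have : i L v = 1 := by simp [hi, hvL]
        rw [this]; linarith
      by_cases huX : u ∈ X
      · have hvX : v ∉ X := fun h => hX u huX v h ha
        have h2 : i X u = 1 := by simp [hi, huX]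
        have h3 : i Y v = 1 := by simp only [hi]; rw [if_pos ((hmY v).2 ⟨hvL, hvX⟩)]
        rw [h2, h3]; linarith
      · have hvX : v ∈ X := by
          by_contra h
          exact hY u huL huX v hvL h ha
        have h2 : i X v = 1 := by simp [hi, hvX]
        have h3 : i Y u = 1 := by simp only [hi]; rw [if_pos ((hmY u).2 ⟨huL, huX⟩)]
        rw [h2, h3]; linarith
    · have h1 : adj G u v = 0 := by simp [adj, ha]
      rw [h1] at e3 ⊢; linarith
  have hLsum : ∑ u, ∑ v, i L u * adj G u v ≤ L.card * D := by
    have h2 : ∀ u, ∑ v, i L u * adj G u v ≤ if u ∈ L then D else 0 := by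
      intro u
      rw [← Finset.mul_sum, ← dg_cast]
      simp only [hi]
      split_ifs with hu
      · rw [one_mul]; exact hD u hu
      · simp
    refine (Finset.sum_le_sum fun u _ => h2 u).trans ?_
    rw [← Finset.sum_filter, Finset.sum_const, nsmul_eq_mul]
    simp
  have h4 : ∑ u, ∑ v, adj G u v ≤ ∑ u, ∑ v, (i X u * i Y v + i Y u * i X v + (i L u * adj G u v + i L v * adj G v u)) :=
    Finset.sum_le_sum fun u _ => Finset.sum_le_sum fun v _ => hpt u v
  simp_rw [Finset.sum_add_distrib] at h4
  rw [← Finset.sum_mul_sum, ← Finset.sum_mul_sum, hsum, hsum] at h4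
  have h5 : ∑ u, ∑ v, i L v * adj G v u = ∑ u, ∑ v, i L u * adj G u v := Finset.sum_comm
  rw [h5] at h4
  linarith

lemma sq_div_four_ge (n : ℕ) : ((n : ℝ) ^ 2 - 1) / 4 ≤ ((n ^ 2 / 4 : ℕ) : ℝ) := by
  have h : n ^ 2 ≤ 4 * (n ^ 2 / 4) + 1 := by
    have h1 : n ^ 2 % 4 ≤ 1 := by
      have h2 : n % 4 < 4 := Nat.mod_lt _ (by norm_num)
      rw [Nat.pow_mod]
      interval_cases n % 4 <;> norm_num
    omega
  have h' : (n : ℝ) ^ 2 ≤ 4 * ((n ^ 2 / 4 : ℕ) : ℝ) + 1 := by exact_mod_cast h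
  linarith

lemma final_arith (n ρ l x y T E : ℝ) (hn : 1000 ≤ n) (hρ : n ≤ 2.001 * ρ) (hl1 : 1 ≤ l) (hl : l ≤ 0.002 * n)
    (hxy : x + y + l = n) (hE : E ≤ 2 * (x * y) + 2 * (l * (0.26 * n)))
    (hT : T ≤ 3 * (l * (0.26 * n) ^ 2)) (hTE : 2 * ρ ^ 3 - ρ * E ≤ T) : ρ ^ 2 ≤ (n ^ 2 - 1) / 4 := by
  have hρ0 : 0 < ρ := by linarith
  have h1 : T ≤ ρ * (2 * (0.204 * (l * n))) := by
    refine hT.trans ?_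
    have h2 : l * n * n ≤ l * n * (2.001 * ρ) := mul_le_mul_of_nonneg_left hρ (by positivity)
    have h3 : 0 ≤ l * n * ρ := by positivity
    nlinarith
  have h2 : ρ * (2 * ρ ^ 2) ≤ ρ * (E + 2 * (0.204 * (l * n))) := by nlinarith
  have h3 := le_of_mul_le_mul_left h2 hρ0
  have h4 : x * y ≤ (n - l) ^ 2 / 4 := by
    have : n - l = x + y := by linarith
    rw [this]; nlinarith [sq_nonneg (x - y)]
  have h5 : l * l ≤ l * (0.002 * n) := mul_le_mul_of_nonneg_left hl (by linarith)
  have h6 : 1000 ≤ l * n := by nlinarith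
  nlinarith

lemma final_count {V : Type*} [Fintype V] {G : SimpleGraph V} (S : Spec G) (hn : 1000 ≤ (Fintype.card V : ℝ))
    (hρ : (Fintype.card V : ℝ) ≤ 2.001 * S.rho) (hρ2 : (((Fintype.card V) ^ 2 / 4 : ℕ) : ℝ) < S.rho ^ 2)
    (L X : Finset V)
    (hXL : ∀ u ∈ X, u ∉ L) (hX : ∀ u ∈ X, ∀ v ∈ X, ¬ G.Adj u v)
    (hY : ∀ u, u ∉ L → u ∉ X → ∀ v, v ∉ L → v ∉ X → ¬ G.Adj u v)
    (hD : ∀ u ∈ L, (dg G Finset.univ u : ℝ) ≤ 0.26 * Fintype.card V)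
    (hL : (L.card : ℝ) ≤ 0.002 * Fintype.card V) : False := by
  have hT := trace3_le G L (0.26 * Fintype.card V) (by
    intro u v w h1 h2 h3
    by_contra hcon
    rw [not_or, not_or] at hcon
    obtain ⟨hu, hv, hw⟩ := hcon
    by_cases hux : u ∈ X
    · have hvx : v ∉ X := fun h => hX u hux v h h1
      have hwx : w ∉ X := fun h => hX w h u hux h3
      exact hY v hv hvx w hw hwx h2
    · have hvx : v ∈ X := by
        by_contra h
        exact hY u hu hux v hv h h1
      have hwx : w ∈ X := by
        by_contra h
        exact hY w hw h u hu hux h3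
      exact hX v hvx w hwx h2) hD
  have hE := sum_adj_le_of_struct G L X (0.26 * Fintype.card V) hXL hX hY hD
  have hTE : 2 * S.rho ^ 3 - S.rho * ∑ u, ∑ v, adj G u v ≤ ∑ u, ((G.adjMatrix ℝ) ^ 3) u u := by
    rw [S.trace_pow, S.sum_adj_eq, S.sum_split, S.sum_split (fun i => S.lam i ^ 3)]
    have h1 : ∀ i ∈ Finset.univ.erase S.i0, -(S.rho * S.lam i ^ 2) ≤ S.lam i ^ 3 := by
      intro i _
      have := neg_le_of_abs_le (S.abs_lam_le i)
      nlinarith [sq_nonneg (S.lam i)]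
    have h2 := Finset.sum_le_sum h1
    rw [Finset.sum_neg_distrib, ← Finset.mul_sum] at h2
    change 2 * S.rho ^ 3 - S.rho * (S.rho ^ 2 + _) ≤ S.rho ^ 3 + _
    nlinarith
  have hcard : L.card + X.card + (L ∪ X)ᶜ.card = Fintype.card V := by
    rw [← Finset.card_union_of_disjoint (Finset.disjoint_left.2 fun u hu hu' => hXL u hu' hu)]
    exact Finset.card_add_card_compl _
  have hcard' : (X.card : ℝ) + (L ∪ X)ᶜ.card + L.card = Fintype.card V := by
    rw [← hcard]; push_cast; ring
  rcases Nat.eq_zero_or_pos L.card with h0 | h0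
  · have hρ0 : 0 < S.rho := by linarith
    rw [h0] at hT hE
    simp only [Nat.cast_zero, zero_mul, mul_zero, add_zero] at hT hE
    have h1 : S.rho * (2 * S.rho ^ 2) ≤ S.rho * (2 * ((X.card : ℝ) * (L ∪ X)ᶜ.card)) := by nlinarith
    have h2 := le_of_mul_le_mul_left h1 hρ0
    have h3 : X.card * (L ∪ X)ᶜ.card ≤ (Fintype.card V) ^ 2 / 4 := by
      rw [Nat.le_div_iff_mul_le (by norm_num), ← hcard, h0]
      nlinarith [sq_nonneg ((X.card : ℤ) - (L ∪ X)ᶜ.card), four_mul_le_sq_add X.card (L ∪ X)ᶜ.card]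
    have h4 : ((X.card : ℝ) * (L ∪ X)ᶜ.card) ≤ ((Fintype.card V) ^ 2 / 4 : ℕ) := by exact_mod_cast h3
    linarith
  · have h1 := final_arith _ _ _ _ _ _ _ hn hρ (by exact_mod_cast h0) hL hcard' hE hT hTE
    have h2 : ((Fintype.card V : ℝ) ^ 2 - 1) / 4 ≤ (((Fintype.card V) ^ 2 / 4 : ℕ) : ℝ) := sq_div_four_ge _
    linarith

lemma caseB2 {V : Type*} [Fintype V] {G : SimpleGraph V} (S : Spec G) (hn : 1000 ≤ (Fintype.card V : ℝ))
    (hρ : (Fintype.card V : ℝ) ≤ 2.001 * S.rho) (hρ2 : (((Fintype.card V) ^ 2 / 4 : ℕ) : ℝ) < S.rho ^ 2)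
    (δ : ℝ) (hδ0 : 0 < δ) (hδ : δ ≤ 0.000001) (i : V) (hi : S.lam i ≤ -((1 - δ) * S.rho))
    (l : ℕ) (hl3 : 3 ≤ l) (hl : (l : ℝ) ≤ Fintype.card V / 4) : HasCyc G l := by
  have hρ0 : 0 < S.rho := by linarith
  have hneg : S.lam i ≤ 0 := by
    have : 0 ≤ (1 - δ) * S.rho := mul_nonneg (by linarith) hρ0.le
    linarith
  obtain ⟨A, hA⟩ := cross_cut S i hneg
  have hsq : ((Fintype.card V : ℝ) ^ 2 - 1) / 4 ≤ (((Fintype.card V) ^ 2 / 4 : ℕ) : ℝ) := sq_div_four_ge _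
  have hlow : (1 / 4 - 0.000002) * (Fintype.card V : ℝ) ^ 2 ≤ ∑ u ∈ A, ∑ v ∈ Aᶜ, adj G u v := by
    refine le_trans ?_ hA
    have h0 : 0 ≤ (1 - 0.000001) * S.rho := by positivity
    have h1 : (1 - 0.000001) * S.rho ≤ - S.lam i := by nlinarith
    have h2 : ((1 - 0.000001) * S.rho) ^ 2 ≤ S.lam i ^ 2 := by
      rw [← neg_sq (S.lam i)]
      exact pow_le_pow_left₀ h0 h1 2
    have h3 : ((1 - 0.000001) * S.rho) ^ 2 = (1 - 0.000001) ^ 2 * S.rho ^ 2 := by ring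
    have h4 : (1000 : ℝ) ^ 2 ≤ (Fintype.card V : ℝ) ^ 2 := pow_le_pow_left₀ (by norm_num) hn 2
    rw [h3] at h2
    norm_num at h2 h4 ⊢
    linarith
  obtain ⟨P, Q, hdisj, hP1, hQ1, hP2, hQ2, hPQ, hP, hQ⟩ := dense_pair G A (by linarith) hlow
  have hbip : Bip G P Q l := by
    refine ⟨hdisj, ?_, ?_, ?_, ?_⟩
    · have : (l : ℝ) ≤ P.card := by linarith
      exact_mod_cast this
    · have : (l : ℝ) ≤ Q.card := by linarith
      exact_mod_cast this
    · intro u hu u' hu'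
      have := common_ge G Q u u'
      have h1 := hP u hu
      have h2 := hP u' hu'
      have : (l : ℝ) ≤ (Q.filter fun q => G.Adj u q ∧ G.Adj u' q).card := by linarith
      exact_mod_cast this
    · intro u hu u' hu'
      have := common_ge G P u u'
      have h1 := hQ u hu
      have h2 := hQ u' hu'
      have : (l : ℝ) ≤ (P.filter fun q => G.Adj u q ∧ G.Adj u' q).card := by linarith
      exact_mod_cast this
  rcases Nat.even_or_odd' l with ⟨m, hm | hm⟩
  · obtain ⟨k, rfl⟩ : ∃ k, l = 2 * k + 4 := ⟨m - 2, by omega⟩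
    exact bip_even hbip
  · obtain ⟨k, rfl⟩ : ∃ k, l = 2 * k + 3 := ⟨m - 1, by omega⟩
    by_contra hno
    obtain ⟨L, X, hXL, hX, hY, hD, hL⟩ :=
      odd_structure G P Q _ rfl hn hdisj hP1 hQ1 hP2 hQ2 hPQ hP hQ k hbip hno
    exact final_count S hn hρ hρ2 L X hXL hX hY hD hL


/-- For every `0 < ε < 1/4` there is `N` such that every graph on `n ≥ N`
vertices with `ρ(G) > √⌊n²/4⌋` contains a cycle of length `ℓ` for every
integer `ℓ ∈ [3, (1/4 - ε)n]`. -/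
theorem spectral_consecutive_cycles (ε : ℝ) (hε0 : 0 < ε) (hε : ε < 1 / 4) :
    ∃ N : ℕ, ∀ (V : Type) (_ : Fintype V) (G : SimpleGraph V),
      N ≤ Fintype.card V →
      Real.sqrt (((Fintype.card V) ^ 2 / 4 : ℕ) : ℝ) < specRad G →
      ∀ ℓ : ℕ, 3 ≤ ℓ → (ℓ : ℝ) ≤ (1 / 4 - ε) * (Fintype.card V : ℝ) →
        ∃ (v : V) (c : G.Walk v v), c.IsCycle ∧ c.length = ℓ := by
  obtain ⟨δ, hδ0, hδε, hδ⟩ : ∃ δ : ℝ, 0 < δ ∧ δ ≤ ε / 2 ∧ δ ≤ 0.000001 :=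
    ⟨min (ε / 2) 0.000001, lt_min (by linarith) (by norm_num), min_le_left _ _, min_le_right _ _⟩
  have hδ' : δ ≤ 1 / 1000000 := by norm_num at hδ ⊢; exact hδ
  obtain ⟨N1, hN1⟩ := gap_lemma δ ε hδ0 (by linarith) hε0 (by linarith)
  obtain ⟨N2, hN2⟩ := gap_lemma (1 / 10) ε (by norm_num) (by norm_num) hε0 (by linarith)
  obtain ⟨N3, hN3⟩ := exists_nat_ge (4 / δ)
  refine ⟨N1 + N2 + N3 + 1000, ?_⟩
  intro V _ G hcard hspec l hl3 hl
  change HasCyc G l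
  have hn : (1000 : ℝ) ≤ Fintype.card V := by
    have : 1000 ≤ Fintype.card V := by omega
    exact_mod_cast this
  have hnδ : 4 ≤ δ * Fintype.card V := by
    have h1 : (N3 : ℝ) ≤ Fintype.card V := by
      have : N3 ≤ Fintype.card V := by omega
      exact_mod_cast this
    have h2 := hN3.trans h1
    rw [div_le_iff₀ hδ0] at h2
    linarith
  have : Nonempty V := Fintype.card_pos_iff.1 (by omega)
  obtain ⟨S⟩ := exists_spec G
  have hsq : ((Fintype.card V : ℝ) ^ 2 - 1) / 4 ≤ (((Fintype.card V) ^ 2 / 4 : ℕ) : ℝ) := sq_div_four_ge _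
  have hρ2 : (((Fintype.card V) ^ 2 / 4 : ℕ) : ℝ) < S.rho ^ 2 := by
    have h1 := hspec.trans_le S.specRad_le
    rwa [Real.sqrt_lt' ((Real.sqrt_nonneg _).trans_lt h1)] at h1
  have hρ0 := S.rho_nonneg
  have hρlow : ((Fintype.card V : ℝ) ^ 2 - 1) / 4 ≤ S.rho ^ 2 := by linarith
  have hδn2 : 4000 ≤ δ * (Fintype.card V : ℝ) ^ 2 := by nlinarith
  have hεn2 : 8000 ≤ ε * (Fintype.card V : ℝ) ^ 2 := by nlinarith [sq_nonneg (Fintype.card V : ℝ)]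
  have hA : (Fintype.card V : ℝ) ≤ (2 + δ / 2) * S.rho := by
    refine abs_le_of_sq_le_sq' ?_ (by positivity) |>.2
    have h1 : (4 + 2 * δ) * S.rho ^ 2 ≤ ((2 + δ / 2) * S.rho) ^ 2 := by
      nlinarith [mul_nonneg (sq_nonneg δ) (sq_nonneg S.rho)]
    have h2 := mul_le_mul_of_nonneg_left hρlow (show 0 ≤ 4 + 2 * δ by linarith)
    linarith
  have hB : (Fintype.card V : ℝ) ≤ 2.001 * S.rho := by
    refine hA.trans (mul_le_mul_of_nonneg_right ?_ hρ0)
    norm_num; linarith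
  have hln : (l : ℝ) * Fintype.card V ≤ (1 / 4 - ε) * (Fintype.card V : ℝ) ^ 2 := by nlinarith
  by_cases hgap : ∀ i, i ≠ S.i0 → |S.lam i| ≤ (1 - δ) * S.rho
  · refine hN1 V _ G S (by omega) hgap hA l hl3 (hln.trans ?_)
    have h6 := mul_le_mul_of_nonneg_left hρlow (show 0 ≤ 1 - ε by linarith)
    linarith
  · push Not at hgap
    obtain ⟨i, hi, hlam⟩ := hgap
    rcases le_total 0 (S.lam i) with h0 | h0
    · rw [abs_of_nonneg h0] at hlam
      obtain ⟨H, T, hHG, hT, hTgap⟩ := caseB1 S hδ0 (by linarith) (by linarith) hB i hi hlam.le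
      have hT0 := T.rho_nonneg
      refine HasCyc.mono hHG (hN2 V _ H T (by omega) hTgap ?_ l hl3 (hln.trans ?_))
      · have : 0.999 * S.rho ≤ T.rho := by
          refine le_trans (mul_le_mul_of_nonneg_right ?_ hρ0) hT
          norm_num; linarith
        norm_num at hB this ⊢
        linarith
      · have h1 : ((1 - δ) * S.rho) ^ 2 ≤ T.rho ^ 2 :=
          pow_le_pow_left₀ (mul_nonneg (by linarith) hρ0) hT 2
        have h2 : (1 - ε) * S.rho ^ 2 ≤ ((1 - δ) * S.rho) ^ 2 := by
          rw [mul_pow]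
          exact mul_le_mul_of_nonneg_right (by nlinarith) (sq_nonneg _)
        have h3 : (1 - ε) * ((1 - ε) * S.rho ^ 2) ≤ (1 - ε) * T.rho ^ 2 :=
          mul_le_mul_of_nonneg_left (h2.trans h1) (by linarith)
        have h4 : (1 - 2 * ε) * S.rho ^ 2 ≤ (1 - ε) * ((1 - ε) * S.rho ^ 2) := by
          linarith [mul_nonneg (sq_nonneg ε) (sq_nonneg S.rho)]
        have h5 : (1 - 2 * ε) * (((Fintype.card V : ℝ) ^ 2 - 1) / 4) ≤ (1 - 2 * ε) * S.rho ^ 2 :=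
          mul_le_mul_of_nonneg_left hρlow (by linarith)
        linarith
    · rw [abs_of_nonpos h0] at hlam
      exact caseB2 S hn hB hρ2 δ hδ0 hδ i (by linarith) l hl3 (by
        have h7 : 0 ≤ ε * (Fintype.card V : ℝ) := by positivity
        linarith)
end
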